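/- arXiv:0910.1575 — 2 statements merged into one kernel-verified Lean document; each statement's English description precedes it below -/
import Mathlib

section
/- Every finite simple graph with at most 8 vertices and at most 20 edges is 2-apex. -/
/-- `H` is a minor of `G`: there are pairwise disjoint nonempty connected branch sets
in `G`, one for each vertex of `H`, with an edge of `G` between the branch sets of
any two vertices adjacent in `H`. -/
def SimpleGraph.IsMinor {W V : Type*} (H : SimpleGraph W) (G : SimpleGraph V) : Prop :=
  ∃ f : W → Set V,
    (∀ w, (f w).Nonempty) ∧
    (∀ w, (G.induce (f w)).Connected) ∧
    (Pairwise fun w₁ w₂ => Disjoint (f w₁) (f w₂)) ∧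
    ∀ ⦃w₁ w₂⦄, H.Adj w₁ w₂ → ∃ v₁ ∈ f w₁, ∃ v₂ ∈ f w₂, G.Adj v₁ v₂

/-- A graph is planar iff it has no `K₅` minor and no `K₃,₃` minor (Kuratowski–Wagner). -/
def SimpleGraph.IsPlanar {V : Type*} (G : SimpleGraph V) : Prop :=
  ¬ (⊤ : SimpleGraph (Fin 5)).IsMinor G ∧
  ¬ (completeBipartiteGraph (Fin 3) (Fin 3)).IsMinor G

/-- A graph is 2-apex if it becomes planar after deleting at most two vertices. -/
def SimpleGraph.TwoApex {V : Type*} (G : SimpleGraph V) : Prop :=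
  ∃ s : Set V, s.ncard ≤ 2 ∧ (G.induce sᶜ).IsPlanar

/-- A graph contains a path on four vertices (as a not necessarily induced subgraph). -/
def HasP4 {V : Type*} (C : SimpleGraph V) : Prop :=
  ∃ a b c d : V, C.Adj a b ∧ C.Adj b c ∧ C.Adj c d ∧ a ≠ c ∧ a ≠ d ∧ b ≠ d

/-- On an edge of a `P₄`-free graph, one endpoint is a leaf or both have degree two. -/
lemma edge_types (C : SimpleGraph (Fin 8)) [DecidableRel C.Adj] (hC : ¬ HasP4 C)
    {u v : Fin 8} (h : C.Adj u v) :
    C.degree u = 1 ∨ C.degree v = 1 ∨ (C.degree u = 2 ∧ C.degree v = 2) := by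
  have hu : v ∈ C.neighborFinset u := by simpa using h
  have hv : u ∈ C.neighborFinset v := by simpa using h.symm
  have cu := Finset.card_erase_of_mem hu
  have cv := Finset.card_erase_of_mem hv
  have pu := Finset.card_pos.2 ⟨v, hu⟩
  have pv := Finset.card_pos.2 ⟨u, hv⟩
  have key : ∀ w ∈ (C.neighborFinset u).erase v, ∀ z ∈ (C.neighborFinset v).erase u, w = z := by
    intro w hw z hz
    simp only [Finset.mem_erase, SimpleGraph.mem_neighborFinset] at hw hz
    by_contra hne
    exact hC ⟨w, u, v, z, hw.2.symm, h, hz.2, hw.1, hne, fun e => hz.1 e.symm⟩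
  rw [SimpleGraph.card_neighborFinset_eq_degree] at *
  by_cases h1 : ((C.neighborFinset u).erase v).Nonempty
  · by_cases h2 : ((C.neighborFinset v).erase u).Nonempty
    · obtain ⟨w, hw⟩ := h1
      obtain ⟨z, hz⟩ := h2
      have a1 : ((C.neighborFinset u).erase v).card ≤ 1 :=
        Finset.card_le_one.2 fun x hx y hy => (key x hx z hz).trans (key y hy z hz).symm
      have a2 : ((C.neighborFinset v).erase u).card ≤ 1 :=
        Finset.card_le_one.2 fun x hx y hy => (key w hw x hx).symm.trans (key w hw y hy)
      have a3 := Finset.card_pos.2 ⟨w, hw⟩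
      have a4 := Finset.card_pos.2 ⟨z, hz⟩
      omega
    · rw [Finset.not_nonempty_iff_eq_empty] at h2
      rw [h2, Finset.card_empty] at cv
      omega
  · rw [Finset.not_nonempty_iff_eq_empty] at h1
    rw [h1, Finset.card_empty] at cu
    omega

/-- A `P₄`-free graph on eight vertices with degree sum at least 16 is 2-regular. -/
lemma all_two (C : SimpleGraph (Fin 8)) [DecidableRel C.Adj] (hC : ¬ HasP4 C)
    (hm : 16 ≤ ∑ v, C.degree v) : ∀ v, C.degree v = 2 := by
  let r : Fin 8 → ℚ := fun u => ((C.degree u : ℕ) : ℚ)⁻¹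
  let F : Fin 8 → Fin 8 → ℚ := fun u v => if C.Adj u v then r u + r v - 1 else 0
  have hdeg : ∀ u, (∑ v, if C.Adj u v then (1 : ℚ) else 0) = C.degree u := by
    intro u
    rw [Finset.sum_boole, ← SimpleGraph.card_neighborFinset_eq_degree,
      SimpleGraph.neighborFinset_eq_filter]
  have hpos : ∀ u v, 0 ≤ F u v := by
    intro u v
    simp only [F, r]
    split_ifs with h
    · rcases edge_types C hC h with h | h | ⟨h, h'⟩
      · rw [h]; simp
      · rw [h]; simp
      · rw [h, h']; norm_num
    · exact le_rfl
  have hone : ∀ u, (C.degree u : ℚ) * r u = if C.degree u = 0 then 0 else 1 := by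
    intro u
    simp only [r]
    split_ifs with h
    · simp [h]
    · exact mul_inv_cancel₀ (by exact_mod_cast h)
  have e1 : ∑ u, ∑ v, (if C.Adj u v then r u else 0)
      = ∑ u, (if C.degree u = 0 then (0 : ℚ) else 1) := by
    refine Finset.sum_congr rfl fun u _ => ?_
    rw [← hone, ← hdeg, Finset.sum_mul]
    exact Finset.sum_congr rfl fun v _ => by simp
  have e2 : ∑ u, ∑ v, (if C.Adj u v then r v else 0)
      = ∑ u, (if C.degree u = 0 then (0 : ℚ) else 1) := by
    rw [Finset.sum_comm, ← e1]
    exact Finset.sum_congr rfl fun u _ => Finset.sum_congr rfl fun v _ => by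
      simp [SimpleGraph.adj_comm]
  have e3 : ∑ u, ∑ v, (if C.Adj u v then (1 : ℚ) else 0) = ((∑ v, C.degree v : ℕ) : ℚ) := by
    push_cast
    exact Finset.sum_congr rfl fun u _ => hdeg u
  have e4 : ∑ u, ∑ v, F u v = 2 * ∑ u, (if C.degree u = 0 then (0 : ℚ) else 1)
      - ((∑ v, C.degree v : ℕ) : ℚ) := by
    rw [← e3, two_mul]
    nth_rewrite 1 [← e1]
    rw [← e2]
    simp only [← Finset.sum_add_distrib, ← Finset.sum_sub_distrib]
    refine Finset.sum_congr rfl fun u _ => Finset.sum_congr rfl fun v _ => ?_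
    simp only [F]
    split_ifs <;> simp
  have hmq : (16 : ℚ) ≤ ((∑ v, C.degree v : ℕ) : ℚ) := by exact_mod_cast hm
  have e5 : ∀ u, (if C.degree u = 0 then (0 : ℚ) else 1) ≤ 1 := by
    intro u; split_ifs <;> norm_num
  have h0 : 0 ≤ ∑ u, ∑ v, F u v :=
    Finset.sum_nonneg fun u _ => Finset.sum_nonneg fun v _ => hpos u v
  have e6 : ∑ u : Fin 8, (if C.degree u = 0 then (0 : ℚ) else 1) ≤ ∑ u : Fin 8, 1 :=
    Finset.sum_le_sum fun u _ => e5 u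
  have e7 : ∑ u : Fin 8, (1 : ℚ) = 8 := by simp
  have e8 : ∑ u : Fin 8, (if C.degree u = 0 then (0 : ℚ) else 1) = ∑ u : Fin 8, 1 := by
    linarith
  have e9 := (Finset.sum_eq_sum_iff_of_le fun u _ => e5 u).1 e8
  have hF : ∑ u, ∑ v, F u v = 0 := by linarith
  intro u
  have hu : C.degree u ≠ 0 := by
    intro h
    have := e9 u (Finset.mem_univ _)
    simp [h] at this
  obtain ⟨v, hv⟩ := (C.degree_pos_iff_exists_adj u).1 (Nat.pos_of_ne_zero hu)
  have f1 := (Finset.sum_eq_zero_iff_of_nonneg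
    fun u _ => Finset.sum_nonneg fun v _ => hpos u v).1 hF u (Finset.mem_univ _)
  have f2 := (Finset.sum_eq_zero_iff_of_nonneg fun v _ => hpos u v).1 f1 v (Finset.mem_univ _)
  have hv0 : C.degree v ≠ 0 := by
    have := (C.degree_pos_iff_exists_adj v).2 ⟨u, hv.symm⟩
    omega
  have nu : ((C.degree u : ℕ) : ℚ) ≠ 0 := by exact_mod_cast hu
  have nv : ((C.degree v : ℕ) : ℚ) ≠ 0 := by exact_mod_cast hv0
  simp only [F, r, hv, if_true] at f2
  rcases edge_types C hC hv with h | h | ⟨h, h'⟩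
  · rw [h] at f2
    simp [hv0] at f2
  · rw [h] at f2
    simp [hu] at f2
  · exact h

/-- A graph on eight vertices with at least eight edges contains a path on four vertices. -/
lemma exists_P4 (C : SimpleGraph (Fin 8)) [DecidableRel C.Adj]
    (hm : 16 ≤ ∑ v, C.degree v) : HasP4 C := by
  by_contra hC
  have h2 := all_two C hC hm
  let N : Fin 8 → Finset (Fin 8) := fun v => insert v (C.neighborFinset v)
  have hN : ∀ v, (N v).card = 3 := by
    intro v
    rw [Finset.card_insert_of_notMem (by simp), SimpleGraph.card_neighborFinset_eq_degree, h2]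
  have hself : ∀ v, v ∈ N v := fun v => Finset.mem_insert_self _ _
  have heq : ∀ u v, u ∈ N v → N u = N v := by
    intro u v huv
    refine Finset.eq_of_subset_of_card_le ?_ (by rw [hN, hN])
    rcases Finset.mem_insert.1 huv with rfl | hu
    · exact subset_rfl
    intro x hx
    rcases Finset.mem_insert.1 hx with rfl | hx
    · exact huv
    by_cases hxv : x = v
    · rw [hxv]; exact hself v
    have : ((C.neighborFinset v).erase u).Nonempty := by
      rw [← Finset.card_pos, Finset.card_erase_of_mem hu,
        SimpleGraph.card_neighborFinset_eq_degree, h2]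
      norm_num
    obtain ⟨b, hb⟩ := this
    simp only [Finset.mem_erase, SimpleGraph.mem_neighborFinset] at hb hu hx
    by_cases hxb : x = b
    · rw [hxb]; exact Finset.mem_insert_of_mem (by simpa using hb.2)
    exact absurd ⟨x, u, v, b, hx.symm, hu.symm, hb.2, hxv, hxb, fun e => hb.1 e.symm⟩ hC
  have hdis : ∀ u v, u ∉ N v → Disjoint (N v) (N u) := by
    intro u v h
    rw [Finset.disjoint_left]
    intro x hx hx'
    exact h (by rw [← heq x v hx, heq x u hx']; exact hself u)
  have ex : ∀ S : Finset (Fin 8), S.card < 8 → ∃ x, x ∉ S := by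
    intro S hS
    by_contra! h
    have : S = Finset.univ := Finset.eq_univ_iff_forall.2 h
    simp [this] at hS
  obtain ⟨y, hy⟩ := ex (N 0) (by rw [hN]; norm_num)
  have c1 := Finset.card_union_of_disjoint (hdis y 0 hy)
  rw [hN, hN] at c1
  obtain ⟨z, hz⟩ := ex (N 0 ∪ N y) (by omega)
  have hz' := Finset.notMem_union.1 hz
  have c2 := Finset.card_union_of_disjoint
    (Finset.disjoint_union_left.2 ⟨hdis z 0 hz'.1, hdis z y hz'.2⟩)
  rw [hN, c1] at c2
  have := Finset.card_le_univ ((N 0 ∪ N y) ∪ N z)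
  rw [c2] at this
  simp at this

/-- Minors are inherited along injective homomorphisms. -/
lemma minor_mono {W V V' : Type*} {H : SimpleGraph W} {G : SimpleGraph V} {G' : SimpleGraph V'}
    (φ : V → V') (hi : Function.Injective φ) (ha : ∀ u v, G.Adj u v → G'.Adj (φ u) (φ v))
    (h : H.IsMinor G) : H.IsMinor G' := by
  obtain ⟨f, hne, hc, hd, hadj⟩ := h
  refine ⟨fun w => φ '' f w, fun w => (hne w).image _, fun w => ?_, fun w₁ w₂ hw => ?_, ?_⟩
  · let ψ : G.induce (f w) →g G'.induce (φ '' f w) :=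
      { toFun := fun x => ⟨φ x.1, x.1, x.2, rfl⟩
        map_rel' := fun {a b} hab => ha _ _ hab }
    refine (hc w).map ψ ?_
    rintro ⟨_, x, hx, rfl⟩
    exact ⟨⟨x, hx⟩, rfl⟩
  · exact (Set.disjoint_image_iff hi).2 (hd hw)
  · intro w₁ w₂ hw
    obtain ⟨a, h1, b, h2, hab⟩ := hadj hw
    exact ⟨_, ⟨a, h1, rfl⟩, _, ⟨b, h2, rfl⟩, ha _ _ hab⟩

/-- The complement of a path on four of six vertices, a planar triangulation. -/
def T6 : SimpleGraph (Fin 6) where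
  Adj u v := u ≠ v ∧ ¬ (u.val + 1 = v.val ∧ v.val ≤ 3) ∧ ¬ (v.val + 1 = u.val ∧ u.val ≤ 3)
  symm := ⟨fun _ _ h => ⟨h.1.symm, h.2.2, h.2.1⟩⟩
  loopless := ⟨fun _ h => h.1 rfl⟩

instance : DecidableRel T6.Adj := fun u v =>
  inferInstanceAs (Decidable (u ≠ v ∧ ¬ (u.val + 1 = v.val ∧ v.val ≤ 3) ∧
    ¬ (v.val + 1 = u.val ∧ u.val ≤ 3)))

/-- Four distinct elements cannot all lie on the same side of `Fin 3 ⊕ Fin 3`. -/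
lemma four_in_three (a b c d : Fin 3 ⊕ Fin 3) (h1 : a.isLeft = b.isLeft)
    (h2 : b.isLeft = c.isLeft) (h3 : c.isLeft = d.isLeft) (i01 : a ≠ b) (i02 : a ≠ c)
    (i03 : a ≠ d) (i12 : b ≠ c) (i13 : b ≠ d) (i23 : c ≠ d) : False := by
  rcases a with a | a <;> rcases b with b | b <;> simp at h1 <;>
    rcases c with c | c <;> simp at h2 <;> rcases d with d | d <;> simp at h3 <;>
    simp only [ne_eq, Sum.inl.injEq, Sum.inr.injEq] at * <;> omega

lemma T6_K33 : ¬ (completeBipartiteGraph (Fin 3) (Fin 3)).IsMinor T6 := by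
  rintro ⟨f, hne, -, hd, hadj⟩
  choose v hv using hne
  have huniq : ∀ x w w', x ∈ f w → x ∈ f w' → w = w' := by
    intro x w w' h h'
    by_contra hw
    exact Set.disjoint_left.1 (hd hw) h h'
  have hinj : Function.Injective v := fun w w' h => huniq (v w) w w' (hv w) (h ▸ hv w')
  have hbij : Function.Bijective v :=
    (Fintype.bijective_iff_injective_and_card v).2 ⟨hinj, by simp⟩
  let e := Equiv.ofBijective v hbij
  have hve : ∀ x, v (e.symm x) = x := fun x => e.apply_symm_apply x
  have hsing : ∀ w x, x ∈ f w → x = v w := by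
    intro w x hx
    have : e.symm x = w := huniq x _ _ (by have := hv (e.symm x); rwa [hve] at this) hx
    rw [← this, hve]
  have hA : ∀ x y, (completeBipartiteGraph (Fin 3) (Fin 3)).Adj (e.symm x) (e.symm y) →
      T6.Adj x y := by
    intro x y h
    obtain ⟨a, h1, b, h2, hab⟩ := hadj h
    rwa [hsing _ _ h1, hsing _ _ h2, hve, hve] at hab
  have hs : ∀ x y, ¬ T6.Adj x y → (e.symm x).isLeft = (e.symm y).isLeft := by
    intro x y h
    by_contra h'
    apply h
    apply hA
    clear hA h
    generalize e.symm x = p at *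
    generalize e.symm y = q at *
    rcases p with a | a <;> rcases q with b | b <;> simp at h' ⊢
  have h01 := hs 0 1 (by decide)
  have h12 := hs 1 2 (by decide)
  have h23 := hs 2 3 (by decide)
  have i01 : e.symm 0 ≠ e.symm 1 := fun h => by simpa using e.symm.injective h
  have i02 : e.symm 0 ≠ e.symm 2 := fun h => by simpa using e.symm.injective h
  have i03 : e.symm 0 ≠ e.symm 3 := fun h => by simpa using e.symm.injective h
  have i12 : e.symm 1 ≠ e.symm 2 := fun h => by simpa using e.symm.injective h
  have i13 : e.symm 1 ≠ e.symm 3 := fun h => by simpa using e.symm.injective h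
  have i23 : e.symm 2 ≠ e.symm 3 := fun h => by simpa using e.symm.injective h
  exact four_in_three _ _ _ _ h01 h12 h23 i01 i02 i03 i12 i13 i23

set_option synthInstance.maxSize 4000 in
set_option synthInstance.maxHeartbeats 400000 in
set_option maxRecDepth 10000 in
lemma T6_K5 : ¬ (⊤ : SimpleGraph (Fin 5)).IsMinor T6 := by
  rintro ⟨f, hne, hc, hd, hadj⟩
  choose v hv using hne
  have huniq : ∀ x w w', x ∈ f w → x ∈ f w' → w = w' := by
    intro x w w' h h'
    by_contra hw
    exact Set.disjoint_left.1 (hd hw) h h'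
  have hinj : Function.Injective v := fun w w' h => huniq (v w) w w' (hv w) (h ▸ hv w')
  have hcard : (Finset.univ.image v).card = 5 := by
    rw [Finset.card_image_of_injective _ hinj]; simp
  have hx : ∃ x, ∀ z, z ≠ x → ∃ w, v w = z := by
    have : (Finset.univ.image v)ᶜ.card = 1 := by
      rw [Finset.card_compl, hcard]; simp
    obtain ⟨x, hx⟩ := Finset.card_eq_one.1 this
    refine ⟨x, fun z hz => ?_⟩
    by_contra h
    have : z ∈ (Finset.univ.image v)ᶜ := by simpa using h
    rw [hx, Finset.mem_singleton] at this
    exact hz this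
  obtain ⟨x, hx⟩ := hx
  have hsub : ∀ w z, z ∈ f w → z = v w ∨ z = x := by
    intro w z hz
    by_cases h : z = x
    · exact Or.inr h
    · obtain ⟨w', rfl⟩ := hx z h
      rw [huniq _ _ _ hz (hv w')]
      exact Or.inl rfl
  have key : ∃ y, (∀ a b, a ≠ b → a ≠ x → a ≠ y → b ≠ x → b ≠ y → T6.Adj a b) ∧
      (y ≠ x → T6.Adj x y ∧ ∀ a, a ≠ x → a ≠ y → T6.Adj a x ∨ T6.Adj a y) := by
    by_cases hxw : ∃ w, x ∈ f w ∧ v w ≠ x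
    · obtain ⟨w, hxw, hne⟩ := hxw
      have hsing : ∀ w', w' ≠ w → ∀ z ∈ f w', z = v w' := by
        intro w' hw z hz
        rcases hsub w' z hz with h | h
        · exact h
        · exact absurd (huniq x _ _ (h ▸ hz) hxw) hw
      refine ⟨v w, ?_, fun _ => ⟨?_, ?_⟩⟩
      · intro a b hab hax hay hbx hby
        obtain ⟨wa, rfl⟩ := hx a hax
        obtain ⟨wb, rfl⟩ := hx b hbx
        obtain ⟨p, hp, q, hq, hpq⟩ := hadj (w₁ := wa) (w₂ := wb)
          (by simpa using fun h => hab (congrArg v h))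
        rwa [hsing wa (fun h => hay (congrArg v h)) p hp,
          hsing wb (fun h => hby (congrArg v h)) q hq] at hpq
      · have hcw := hc w
        have : Nontrivial (f w) :=
          ⟨⟨x, hxw⟩, ⟨v w, hv w⟩, fun h => hne (congrArg Subtype.val h).symm⟩
        obtain ⟨⟨q, hq⟩, hxq⟩ := hcw.preconnected.exists_adj_of_nontrivial ⟨x, hxw⟩
        have hxq' : T6.Adj x q := hxq
        rcases hsub w q hq with h | h
        · rwa [h] at hxq'
        · exact absurd h.symm hxq'.ne
      · intro a hax hay
        obtain ⟨wa, rfl⟩ := hx a hax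
        have hw : wa ≠ w := fun h => hay (congrArg v h)
        obtain ⟨p, hp, q, hq, hpq⟩ := hadj (w₁ := wa) (w₂ := w) (by simpa using hw)
        rw [hsing wa hw p hp] at hpq
        rcases hsub w q hq with h | h
        · right; rwa [h] at hpq
        · left; rwa [h] at hpq
    · push Not at hxw
      have hsing : ∀ w' z, z ∈ f w' → z = v w' := by
        intro w' z hz
        rcases hsub w' z hz with h | h
        · exact h
        · rw [h, hxw w' (h ▸ hz)]
      refine ⟨x, ?_, fun h => absurd rfl h⟩
      intro a b hab hax _ hbx _
      obtain ⟨wa, rfl⟩ := hx a hax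
      obtain ⟨wb, rfl⟩ := hx b hbx
      obtain ⟨p, hp, q, hq, hpq⟩ := hadj (w₁ := wa) (w₂ := wb)
          (by simpa using fun h => hab (congrArg v h))
      rwa [hsing wa p hp, hsing wb q hq] at hpq
  clear hsub hx hcard hinj huniq hv v hadj hd hc f
  obtain ⟨y, h1, h2⟩ := key
  have p1 := h1 0 1 (by decide)
  have p2 := h1 1 2 (by decide)
  have p3 := h1 2 3 (by decide)
  have q0 := fun h => (h2 h).1
  have q1 := fun h => (h2 h).2 1
  have q2 := fun h => (h2 h).2 2
  clear h1 h2
  revert x y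
  decide

/-- Four distinct elements of `Fin 8` can be moved to the first four positions. -/
lemma exists_perm (a b c d : Fin 8) (hab : a ≠ b) (hac : a ≠ c) (had : a ≠ d) (hbc : b ≠ c)
    (hbd : b ≠ d) (hcd : c ≠ d) :
    ∃ σ : Equiv.Perm (Fin 8), σ a = 0 ∧ σ b = 1 ∧ σ c = 2 ∧ σ d = 3 := by
  let g : Fin 4 → Fin 8 := ![a, b, c, d]
  have hg : Function.Injective g := by
    intro i j h
    fin_cases i <;> fin_cases j <;> simp_all [g]
  let k : Fin 4 → Fin 8 := Fin.castLE (by norm_num)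
  have hk : Function.Injective k := Fin.castLE_injective _
  let e : Set.range g ≃ Set.range k := (Equiv.ofInjective g hg).symm.trans (Equiv.ofInjective k hk)
  have he : ∀ i, e.extendSubtype (g i) = k i := by
    intro i
    rw [Equiv.extendSubtype_apply_of_mem e (g i) ⟨i, rfl⟩]
    have : (⟨g i, ⟨i, rfl⟩⟩ : Set.range g) = Equiv.ofInjective g hg i := rfl
    simp only [e, Equiv.trans_apply]
    rw [this, Equiv.symm_apply_apply]
    rfl
  exact ⟨e.extendSubtype, he 0, he 1, he 2, he 3⟩

/-- Every finite simple graph with at most 8 vertices and at most 20 edges is 2-apex. -/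
theorem stmt1 {V : Type*} [Fintype V] (G : SimpleGraph V)
    (hV : Fintype.card V ≤ 8) (hE : G.edgeSet.ncard ≤ 20) : G.TwoApex := by
  classical
  obtain ⟨e⟩ : Nonempty (V ↪ Fin 8) :=
    Function.Embedding.nonempty_of_card_le (by simpa using hV)
  let H : SimpleGraph (Fin 8) := G.map e
  have hH : H.edgeFinset.card ≤ 20 := by
    rw [← SimpleGraph.coe_edgeFinset, Set.ncard_coe_finset] at hE
    have : H.edgeFinset.card = G.edgeFinset.card := SimpleGraph.card_edgeFinset_map e G
    omega
  have hC : 16 ≤ ∑ v, Hᶜ.degree v := by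
    have h1 : ∀ v, Hᶜ.degree v + H.degree v = 7 := by
      intro v
      rw [SimpleGraph.degree_compl]
      have := H.degree_lt_card_verts v
      simp only [Fintype.card_fin] at *
      omega
    have h2 : ∑ v, Hᶜ.degree v + ∑ v, H.degree v = 56 := by
      rw [← Finset.sum_add_distrib, Finset.sum_congr rfl fun v _ => h1 v]
      simp
    have h3 := H.sum_degrees_eq_twice_card_edges
    omega
  obtain ⟨a, b, c, d, hab, hbc, hcd, hac, had, hbd⟩ := exists_P4 Hᶜ hC
  obtain ⟨σ, ha, hb, hc, hd⟩ := exists_perm a b c d hab.ne hac had hbc.ne hbd hcd.ne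
  have hadj : ∀ u v, G.Adj u v → H.Adj (e u) (e v) := fun u v h =>
    (SimpleGraph.map_adj_apply).2 h
  let ψ : V → Fin 8 := fun u => σ (e u)
  have hψ : Function.Injective ψ := σ.injective.comp e.injective
  let s : Set V := {u | 6 ≤ (ψ u).val}
  have hs : s.ncard ≤ 2 := by
    have : (ψ '' s).ncard ≤ ({6, 7} : Set (Fin 8)).ncard := by
      apply Set.ncard_le_ncard _ (Set.toFinite _)
      rintro _ ⟨u, hu, rfl⟩
      have hu : 6 ≤ (ψ u).val := hu
      simp only [Set.mem_insert_iff, Set.mem_singleton_iff]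
      generalize ψ u = x at *
      revert x
      decide
    rw [Set.ncard_image_of_injective _ hψ] at this
    exact this.trans (by rw [Set.ncard_pair (by decide)])
  refine ⟨s, hs, ?_⟩
  let φ : (sᶜ : Set V) → Fin 6 := fun u => ⟨(ψ u.1).val, by
    have h : ¬ 6 ≤ (ψ u.1).val := u.2
    omega⟩
  have hφ : Function.Injective φ := by
    intro u v h
    apply Subtype.ext
    apply hψ
    apply Fin.ext
    have h' : (φ u).val = (φ v).val := by rw [h]
    exact h'
  have hbad : ∀ u v, G.Adj u v → ¬ ((ψ u).val + 1 = (ψ v).val ∧ (ψ v).val ≤ 3) := by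
    rintro u v h ⟨h1, h2⟩
    have h := hadj u v h
    have hu : e u = σ.symm (ψ u) := by simp [ψ]
    have hv : e v = σ.symm (ψ v) := by simp [ψ]
    rw [hu, hv] at h
    rw [← Equiv.eq_symm_apply] at ha hb hc hd
    have : (ψ u = 0 ∧ ψ v = 1) ∨ (ψ u = 1 ∧ ψ v = 2) ∨ (ψ u = 2 ∧ ψ v = 3) := by
      simp only [Fin.ext_iff]
      simp
      omega
    rcases this with ⟨p, q⟩ | ⟨p, q⟩ | ⟨p, q⟩ <;> rw [p, q] at h
    · rw [← ha, ← hb] at h; exact hab.2 h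
    · rw [← hb, ← hc] at h; exact hbc.2 h
    · rw [← hc, ← hd] at h; exact hcd.2 h
  have hφadj : ∀ u v, (G.induce sᶜ).Adj u v → T6.Adj (φ u) (φ v) := by
    intro u v h
    have h' : G.Adj u.1 v.1 := h
    exact ⟨fun e => h.ne (hφ e), hbad _ _ h', hbad _ _ h'.symm⟩
  exact ⟨fun h => T6_K5 (minor_mono φ hφ hφadj h), fun h => T6_K33 (minor_mono φ hφ hφadj h)⟩
end

section
/- Every finite simple graph with exactly 9 vertices and at most 20 edges is 2-apex. -/
namespace TA
/-- packed table of the digit sums of the numbers below 512, four bits each -/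
def popT : Nat := 19255054270729893008491005534149248252256602926781282732690012290033276866808550227997693622604181043369877307314662111123331664736047184874077759948250443227256975055791411108947596559321109802036954624006373818143946017559684403162578529602068048730946422771823999999239149825717005481632390412975320206440279958629013623038381969796702446623878923952740084796477918444418310443408990755144638227854376788458924235859745937832180260096754594561627738988715237553750525742696058226208231293151672720457407743312923599856247524705366024968272077418776390695019160354360691986468851967610039890687248939048398439391504
/-- evaluate the number `n` before passing it on -/
def force {α : Type} (n : Nat) (f : Nat → α) : α :=
  Nat.rec (motive := fun _ => α) (f 0) (fun k _ => f k) (Nat.add n 1)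
def bor (x y : Bool) : Bool := Bool.rec (motive := fun _ => Bool) y true x
def band (x y : Bool) : Bool := Bool.rec (motive := fun _ => Bool) false y x
def lall {α : Type} (l : List α) (p : α → Bool) : Bool :=
  List.rec (motive := fun _ => Bool) true (fun h _ ih => band (p h) ih) l
def lany {α : Type} (l : List α) (p : α → Bool) : Bool :=
  List.rec (motive := fun _ => Bool) false (fun h _ ih => bor (p h) ih) l
def lsum (l : List Nat) (p : Nat → Nat) : Nat :=
  List.rec (motive := fun _ => Nat) 0 (fun h _ ih => Nat.add (p h) ih) l
def pop (x : Nat) : Nat := Nat.land (Nat.shiftRight popT (Nat.mul 4 x)) 15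
def row (m i : Nat) : Nat := Nat.land (Nat.shiftRight m (Nat.mul 9 i)) 511
/-- both bits of the edge `ij` -/
def eb (i j : Nat) : Nat :=
  Nat.lor (Nat.shiftLeft 1 (Nat.add (Nat.mul 9 i) j)) (Nat.shiftLeft 1 (Nat.add (Nat.mul 9 j) i))
def full : Nat := Nat.sub (Nat.pow 2 81) 1
def colM : Nat := 4731607904558235517441
/-- all bits in row or column `c` -/
def inc (c : Nat) : Nat := Nat.lor (Nat.shiftLeft 511 (Nat.mul 9 c)) (Nat.shiftLeft colM c)
def L9 : List Nat := [0, 1, 2, 3, 4, 5, 6, 7, 8]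
def sumPop (M : Nat) : Nat := lsum L9 fun i => pop (row M i)
def cntGe (k M : Nat) : Nat :=
  lsum L9 fun i => Bool.rec (motive := fun _ => Nat) 0 1 (Nat.ble k (pop (row M i)))
def triTest (M : Nat) : Bool :=
  lall L9 fun y => force (row M y) fun ry => bor (Nat.ble (pop ry) 2) <|
    lall L9 fun z => bor (Nat.ble z y) <| force (Nat.land ry (row M z)) fun q =>
      bor (Nat.ble (pop q) 2) <|
      lall L9 fun x => bor (Nat.beq x y) <| bor (Nat.beq x z) <|
        bor (Nat.ble (pop (Nat.land q (row M x))) 1) <|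
         Nat.ble (pop (Nat.land q (Nat.xor 511 (Nat.shiftLeft 1 x)))) 2
def test (M : Nat) : Bool :=
  band (Nat.ble (sumPop M) 22) <| band (Nat.ble (cntGe 4 M) 4) <|
    bor (Nat.ble (cntGe 3 M) 5) (triTest M)
/-- some deletion of two vertices makes the complement of `A` planar -/
def good (A : Nat) : Bool :=
  force (Nat.xor full A) fun U =>
  lany L9 fun c => lany L9 fun d => band (Nat.ble (Nat.succ d) c)
    (force (Nat.land U (Nat.xor full (Nat.lor (inc c) (inc d)))) test)
def hcount (P : Nat) : Nat := lsum [0, 1, 2, 3, 4, 5, 6] fun i => pop (Nat.land (row P i) 127)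
def hasB (m i j : Nat) : Bool := Nat.beq (Nat.land (Nat.shiftRight (row m i) j) 1) 1
/-- numerical data: degree bound, degree bound at vertex 7, bound for the number of non-neighbours
of the vertices 7 and 8, bound for the number of edges inside 0..6, and a flag for the clique condition -/
structure Par where
  D : Nat
  Da : Nat
  ab : Nat
  eH : Nat
  fl : Bool
/-- the partial graph with edges `P` and non-edges `A` violates a constraint near the pair `ij` -/
def conf (p : Par) (i j P A : Nat) : Bool :=
  Bool.rec (motive := fun _ => Bool)
    (bor (Nat.ble (Nat.succ p.ab) (pop (row A j))) <|
     bor (Nat.ble (Nat.succ (Bool.rec (motive := fun _ => Nat) p.D p.Da (Nat.beq j 7))) (pop (row P j))) <|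
     bor (Nat.ble (Nat.succ p.D) (pop (row P i))) <|
      band p.fl <| band (Nat.ble 5 (pop (row P i))) (bor (hasB A i 7) (hasB A i 8)))
    (bor (Nat.ble (Nat.succ (Nat.mul 2 p.eH)) (hcount P)) <|
      bor (Nat.ble 50 (Nat.add (hcount A) (Nat.mul 2 p.eH)))
      (bor (Nat.ble (Nat.succ p.D) (pop (row P i))) (Nat.ble (Nat.succ p.D) (pop (row P j)))))
    (Nat.ble j 6)
/-- exhaustive search over all ways to complete the partial graph -/
def search (p : Par) (l : List (Nat × Nat)) : Nat → Nat → Bool :=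
  List.rec (motive := fun _ => Nat → Nat → Bool) (fun _ A => good A)
    (fun e _ ih P A =>
      band
       (bor (hasB P e.1 e.2) (force (Nat.lor A (eb e.1 e.2)) fun A' =>
          bor (conf p e.1 e.2 P A') (ih P A')))
       (bor (hasB A e.1 e.2) (force (Nat.lor P (eb e.1 e.2)) fun P' =>
          bor (conf p e.1 e.2 P' A) (ih P' A)))) l
def mk (l : List (Nat × Nat)) : Nat :=
  List.rec (motive := fun _ => Nat) 0 (fun e _ s => Nat.lor (eb e.1 e.2) s) l
def pat0 : List (Nat × Nat) :=
  [(0, 3), (0, 4), (0, 5), (1, 3), (1, 4), (1, 5), (2, 3), (2, 4), (2, 5)]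
def pat1 : List (Nat × Nat) :=
  [(0, 6), (3, 6), (0, 4), (0, 5), (1, 3), (1, 4), (1, 5), (2, 3), (2, 4), (2, 5)]
def pat2 : List (Nat × Nat) :=
  [(0, 1), (0, 2), (0, 3), (0, 4), (1, 2), (1, 3), (1, 4), (2, 3), (2, 4), (3, 4)]
def pat3 : List (Nat × Nat) :=
  [(0, 5), (1, 5), (0, 2), (0, 3), (0, 4), (1, 2), (1, 3), (1, 4), (2, 3), (2, 4), (3, 4)]
def pats : List (List (Nat × Nat)) := [pat0, pat1, pat2, pat3]
def star : List (Nat × Nat) :=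
  [(0, 7), (1, 7), (2, 7), (3, 7), (4, 7), (5, 7), (6, 7), (7, 8)]
def diag : List (Nat × Nat) :=
  [(0, 0), (1, 1), (2, 2), (3, 3), (4, 4), (5, 5), (6, 6), (7, 7), (8, 8)]
def edges : List (Nat × Nat) :=
  [(0, 1), (0, 2), (0, 3), (0, 4), (0, 5), (0, 6), (1, 2), (1, 3), (1, 4), (1, 5), (1, 6),
   (2, 3), (2, 4), (2, 5), (2, 6), (3, 4), (3, 5), (3, 6), (4, 5), (4, 6), (5, 6),
   (0, 7), (0, 8), (1, 7), (1, 8), (2, 7), (2, 8), (3, 7), (3, 8), (4, 7), (4, 8),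
   (5, 7), (5, 8), (6, 7), (6, 8)]
def run (p : Par) (P A : List (Nat × Nat)) : Bool :=
  lall pats fun q => force (mk (P ++ q)) fun P => force (mk (diag ++ A)) fun A => search p edges P A
def par1a : Par := ⟨6, 8, 3, 9, false⟩
def par1b : Par := ⟨5, 8, 4, 10, false⟩
def par2 : Par := ⟨5, 5, 4, 10, false⟩
def par3 : Par := ⟨5, 5, 4, 11, true⟩
open Classical in
/-- number of neighbours -/
noncomputable def nb (G : SimpleGraph (Fin 9)) (v : Fin 9) : ℕ := ∑ w, if G.Adj v w then 1 else 0
def Lo (P : ℕ) (G : SimpleGraph (Fin 9)) : Prop :=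
  ∀ i j : Fin 9, P.testBit (9 * i + j) = true → G.Adj i j
def No (A : ℕ) (G : SimpleGraph (Fin 9)) : Prop :=
  ∀ i j : Fin 9, A.testBit (9 * i + j) = true → ¬ G.Adj i j

theorem force_eq {α : Type} (n : Nat) (f : Nat → α) : force n f = f n := rfl
theorem bor_eq (x y : Bool) : bor x y = (x || y) := by cases x <;> rfl
theorem band_eq (x y : Bool) : band x y = (x && y) := by cases x <;> rfl
theorem lall_iff {α : Type} (l : List α) (p : α → Bool) :
    lall l p = true ↔ ∀ x ∈ l, p x = true := by
  induction l with
  | nil => simp [lall]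
  | cons h t ih =>
    have : lall (h :: t) p = band (p h) (lall t p) := rfl
    rw [this, band_eq]; simp [ih]
theorem lany_iff {α : Type} (l : List α) (p : α → Bool) :
    lany l p = true ↔ ∃ x ∈ l, p x = true := by
  induction l with
  | nil => simp [lany]
  | cons h t ih =>
    have : lany (h :: t) p = bor (p h) (lany t p) := rfl
    rw [this, bor_eq]; simp [ih]
theorem lsum_eq (l : List Nat) (p : Nat → Nat) : lsum l p = (l.map p).sum := by
  induction l with
  | nil => rfl
  | cons h t ih =>
    have : lsum (h :: t) p = p h + lsum t p := rfl
    rw [this, ih]; simp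
theorem lsum9 (p : Nat → Nat) : lsum L9 p = ∑ i : Fin 9, p i := by
  rw [lsum_eq]; simp [L9, Fin.sum_univ_succ]
theorem mem_L9 (i : Fin 9) : (i : ℕ) ∈ L9 := by revert i; decide
theorem lt_of_mem_L9 {c : ℕ} (h : c ∈ L9) : c < 9 := by revert c; decide

theorem row_testBit (m : ℕ) (i j : Fin 9) : (row m i).testBit j = m.testBit (9 * i + j) := by
  have : row m i = (m >>> (9 * (i : ℕ))) &&& (2 ^ 9 - 1) := rfl
  rw [this, Nat.testBit_and, Nat.testBit_two_pow_sub_one, Nat.testBit_shiftRight]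
  simp
theorem row_lt (m i : ℕ) : row m i < 512 := by
  have : row m i = (m >>> (9 * (i : ℕ))) &&& (2 ^ 9 - 1) := rfl
  rw [this, Nat.and_two_pow_sub_one_eq_mod]
  exact Nat.mod_lt _ (by norm_num)
theorem land_lt (x y : ℕ) (h : x < 512) : Nat.land x y < 512 :=
  lt_of_le_of_lt (Nat.and_le_left) h
theorem land_testBit (x y k : ℕ) : (Nat.land x y).testBit k = (x.testBit k && y.testBit k) :=
  Nat.testBit_and x y k
theorem lor_testBit (x y k : ℕ) : (Nat.lor x y).testBit k = (x.testBit k || y.testBit k) :=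
  Nat.testBit_or x y k
theorem xor_testBit (x y k : ℕ) : (Nat.xor x y).testBit k = (x.testBit k ^^ y.testBit k) :=
  Nat.testBit_xor x y k
set_option maxRecDepth 10000 in
theorem pop_eq_aux : ∀ x : Fin 512, pop x = ∑ j : Fin 9, if (x : ℕ).testBit j = true then 1 else 0 := by
  decide +kernel
theorem pop_eq {x : ℕ} (h : x < 512) :
    pop x = ∑ j : Fin 9, if x.testBit j = true then 1 else 0 := pop_eq_aux ⟨x, h⟩

theorem pop_ge {x n : ℕ} (h : x < 512) (g : Fin n → Fin 9) (hg : Function.Injective g)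
    (hx : ∀ i, x.testBit (g i) = true) : n ≤ pop x := by
  rw [pop_eq h, Finset.sum_boole]
  have : (Finset.univ.image g) ⊆ Finset.univ.filter fun j : Fin 9 => x.testBit j = true := by
    intro y hy
    simp only [Finset.mem_image, Finset.mem_univ, true_and] at hy
    obtain ⟨i, rfl⟩ := hy
    simp [hx]
  have h2 := Finset.card_le_card this
  rw [Finset.card_image_of_injective _ hg] at h2
  simpa using h2

theorem pop_Lo {P : ℕ} {G : SimpleGraph (Fin 9)} (h : Lo P G) (i : Fin 9) : pop (row P i) ≤ nb G i := by
  classical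
  rw [pop_eq (row_lt _ _), nb]
  apply Finset.sum_le_sum
  intro j _
  rw [row_testBit]
  have := h i j
  split_ifs <;> first | omega | (exfalso; tauto)

theorem pop_No {A : ℕ} {G : SimpleGraph (Fin 9)} (h : No A G) (i : Fin 9) :
    pop (row A i) + nb G i ≤ 9 := by
  classical
  rw [pop_eq (row_lt _ _), nb, ← Finset.sum_add_distrib]
  calc _ ≤ ∑ j : Fin 9, 1 := by
        apply Finset.sum_le_sum
        intro j _
        rw [row_testBit]
        have := h i j
        split_ifs <;> first | omega | (exfalso; tauto)
    _ = 9 := by simp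

open Classical in
/-- twice the number of edges avoiding 7 and 8 -/
noncomputable def hs (G : SimpleGraph (Fin 9)) : ℕ :=
  ∑ i : Fin 9, ∑ j : Fin 9, if (i ≠ 7 ∧ i ≠ 8) ∧ (j ≠ 7 ∧ j ≠ 8) ∧ G.Adj i j then 1 else 0

theorem testBit_127 : ∀ j : Fin 9, (127 : ℕ).testBit j = decide (j ≠ 7 ∧ j ≠ 8) := by decide

theorem lsum7 (p : Nat → Nat) :
    lsum [0, 1, 2, 3, 4, 5, 6] p = ∑ i : Fin 9, if i ≠ 7 ∧ i ≠ 8 then p i else 0 := by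
  rw [lsum_eq, Fin.sum_univ_castSucc, Fin.sum_univ_eight]
  simp +decide only [List.map_cons, List.map_nil, List.sum_cons, List.sum_nil, if_true, if_false]
  simp only [Fin.val_castSucc]
  change _ = p 0 + p 1 + p 2 + p 3 + p 4 + p 5 + p 6 + 0 + 0
  omega

theorem hcount_eq (P : ℕ) : hcount P = ∑ i : Fin 9, ∑ j : Fin 9,
    if (i ≠ 7 ∧ i ≠ 8) ∧ (j ≠ 7 ∧ j ≠ 8) ∧ P.testBit (9 * i + j) = true then 1 else 0 := by
  rw [hcount, lsum7]
  apply Finset.sum_congr rfl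
  intro i _
  by_cases hi : i ≠ 7 ∧ i ≠ 8
  · rw [if_pos hi, pop_eq (land_lt _ _ (row_lt _ _))]
    apply Finset.sum_congr rfl
    intro j _
    rw [land_testBit, row_testBit, testBit_127]
    simp only [Bool.and_eq_true, decide_eq_true_eq]
    congr 1
    apply propext; tauto
  · rw [if_neg hi]; simp [hi]

theorem hcount_Lo {P : ℕ} {G : SimpleGraph (Fin 9)} (h : Lo P G) : hcount P ≤ hs G := by
  classical
  rw [hcount_eq, hs]
  apply Finset.sum_le_sum; intro i _
  apply Finset.sum_le_sum; intro j _
  by_cases hh : (i ≠ 7 ∧ i ≠ 8) ∧ (j ≠ 7 ∧ j ≠ 8) ∧ P.testBit (9 * i + j) = true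
  · rw [if_pos hh, if_pos ⟨hh.1, hh.2.1, h i j hh.2.2⟩]
  · rw [if_neg hh]; exact Nat.zero_le _

theorem hcount_No {A : ℕ} {G : SimpleGraph (Fin 9)} (h : No A G) : hcount A + hs G ≤ 49 := by
  classical
  rw [hcount_eq, hs, ← Finset.sum_add_distrib]
  calc _ ≤ ∑ i : Fin 9, ∑ j : Fin 9, if (i ≠ 7 ∧ i ≠ 8) ∧ (j ≠ 7 ∧ j ≠ 8) then 1 else 0 := by
        apply Finset.sum_le_sum; intro i _
        rw [← Finset.sum_add_distrib]
        apply Finset.sum_le_sum; intro j _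
        have := h i j
        split_ifs <;> first | omega | (exfalso; tauto)
    _ = 49 := by decide

theorem hasB_eq (m : ℕ) (i j : Fin 9) : hasB m i j = m.testBit (9 * i + j) := by
  rw [← row_testBit, Nat.testBit_eq_decide_div_mod_eq]
  have : hasB m i j = Nat.beq (((row m i) >>> (j : ℕ)) &&& 1) 1 := rfl
  rw [this, Nat.and_one_is_mod, Nat.shiftRight_eq_div_pow]
  rw [Bool.eq_iff_iff, Nat.beq_eq, decide_eq_true_eq]

theorem eb_testBit (i j k : ℕ) :
    (eb i j).testBit k = true ↔ k = 9 * i + j ∨ k = 9 * j + i := by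
  have : eb i j = 1 <<< (9 * i + j) ||| 1 <<< (9 * j + i) := rfl
  rw [this, Nat.testBit_or, Nat.one_shiftLeft, Nat.one_shiftLeft, Nat.testBit_two_pow,
    Nat.testBit_two_pow, Bool.or_eq_true, decide_eq_true_eq, decide_eq_true_eq]
  exact or_congr eq_comm eq_comm

theorem idx_inj {i j a b : ℕ} (hj : j < 9) (hb : b < 9) (h : 9 * i + j = 9 * a + b) :
    i = a ∧ j = b := by omega

theorem Lo_lor {P : ℕ} {G : SimpleGraph (Fin 9)} (h : Lo P G) {i j : Fin 9} (hij : G.Adj i j) :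
    Lo (Nat.lor P (eb i j)) G := by
  intro a b hab
  rw [lor_testBit, Bool.or_eq_true, eb_testBit] at hab
  rcases hab with hab | hab | hab
  · exact h a b hab
  · obtain ⟨h1, h2⟩ := idx_inj b.2 j.2 hab
    rwa [Fin.ext h1, Fin.ext h2]
  · obtain ⟨h1, h2⟩ := idx_inj b.2 i.2 hab
    rw [Fin.ext h1, Fin.ext h2]; exact hij.symm

theorem No_lor {P : ℕ} {G : SimpleGraph (Fin 9)} (h : No P G) {i j : Fin 9} (hij : ¬ G.Adj i j) :
    No (Nat.lor P (eb i j)) G := by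
  intro a b hab
  rw [lor_testBit, Bool.or_eq_true, eb_testBit] at hab
  rcases hab with hab | hab | hab
  · exact h a b hab
  · obtain ⟨h1, h2⟩ := idx_inj b.2 j.2 hab
    rwa [Fin.ext h1, Fin.ext h2]
  · obtain ⟨h1, h2⟩ := idx_inj b.2 i.2 hab
    rw [Fin.ext h1, Fin.ext h2]; exact fun hc => hij hc.symm

theorem Lo_mk {G : SimpleGraph (Fin 9)} (l : List (ℕ × ℕ)) (hl : ∀ e ∈ l, e.1 < 9 ∧ e.2 < 9)
    (h : ∀ i j : Fin 9, ((i : ℕ), (j : ℕ)) ∈ l → G.Adj i j) : Lo (mk l) G := by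
  induction l with
  | nil => intro i j hij; simp [mk] at hij
  | cons e t ih =>
    have h0 : mk (e :: t) = Nat.lor (eb e.1 e.2) (mk t) := rfl
    have h1 : mk (e :: t) = Nat.lor (mk t) (eb e.1 e.2) := by rw [h0]; exact Nat.or_comm _ _
    have he := hl e (by simp)
    rw [h1]
    exact Lo_lor (i := ⟨e.1, he.1⟩) (j := ⟨e.2, he.2⟩)
      (ih (fun e' h' => hl e' (by simp [h'])) (fun i j hij => h i j (by simp [hij])))
      (h _ _ (by simp))

theorem No_mk {G : SimpleGraph (Fin 9)} (l : List (ℕ × ℕ)) (hl : ∀ e ∈ l, e.1 < 9 ∧ e.2 < 9)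
    (h : ∀ i j : Fin 9, ((i : ℕ), (j : ℕ)) ∈ l → ¬ G.Adj i j) : No (mk l) G := by
  induction l with
  | nil => intro i j hij; simp [mk] at hij
  | cons e t ih =>
    have h0 : mk (e :: t) = Nat.lor (eb e.1 e.2) (mk t) := rfl
    have h1 : mk (e :: t) = Nat.lor (mk t) (eb e.1 e.2) := by rw [h0]; exact Nat.or_comm _ _
    have he := hl e (by simp)
    rw [h1]
    exact No_lor (i := ⟨e.1, he.1⟩) (j := ⟨e.2, he.2⟩)
      (ih (fun e' h' => hl e' (by simp [h'])) (fun i j hij => h i j (by simp [hij])))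
      (h _ _ (by simp))

theorem inc_testBit : ∀ c i j : Fin 9, (inc c).testBit (9 * i + j) = (decide (i = c) || decide (j = c)) := by
  decide +kernel
theorem full_testBit (k : ℕ) : full.testBit k = decide (k < 81) :=
  Nat.testBit_two_pow_sub_one 81 k

/-- constraints of a run -/
structure Cons (p : Par) (G : SimpleGraph (Fin 9)) : Prop where
  hD : ∀ v, v ≠ 7 → nb G v ≤ p.D
  hDa : nb G 7 ≤ p.Da
  ha : 9 ≤ p.ab + nb G 7
  hb : 9 ≤ p.ab + nb G 8
  hH : hs G = 2 * p.eH
  hf : p.fl = true → ∀ v, v ≠ 7 → v ≠ 8 → 5 ≤ nb G v → G.Adj v 7 ∧ G.Adj v 8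

theorem conf_sound (p : Par) (G : SimpleGraph (Fin 9)) (hc : Cons p G) (i j : Fin 9) (hij : i < j) (hi : i < 7)
    (P A : ℕ) (hP : Lo P G) (hA : No A G) : conf p i j P A = false := by
  have h1 := pop_Lo hP i
  have h2 := pop_Lo hP j
  have h3 := pop_No hA j
  have h4 := hcount_Lo hP
  have h5 := hcount_No hA
  have h6 := hc.hH
  have hiD := hc.hD i (by rintro rfl; exact absurd hi (by decide))
  have e1 : hasB A i 7 = A.testBit (9 * i + (7 : Fin 9)) := hasB_eq A i 7
  have e2 : hasB A i 8 = A.testBit (9 * i + (8 : Fin 9)) := hasB_eq A i 8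
  rw [← Bool.not_eq_true]
  intro hcon
  unfold conf at hcon
  by_cases hj : Nat.ble j 6 = true
  · rw [hj] at hcon
    have hj' : (j : ℕ) ≤ 6 := Nat.le_of_ble_eq_true hj
    have hjD := hc.hD j (by rintro rfl; exact absurd hj' (by decide))
    simp only [bor_eq, Bool.or_eq_true, Nat.ble_eq, Nat.succ_eq_add_one, Nat.mul_eq, Nat.add_eq] at hcon
    omega
  · rw [Bool.not_eq_true] at hj
    rw [hj] at hcon
    have hj' : ¬ (j : ℕ) ≤ 6 := by rw [← Nat.ble_eq, hj]; simp
    simp only [bor_eq, band_eq, Bool.or_eq_true, Bool.and_eq_true, Nat.ble_eq, Nat.succ_eq_add_one] at hcon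
    have hj2 : j = 7 ∨ j = 8 := by omega
    have hf : ¬ (p.fl = true ∧ 5 ≤ pop (row P i) ∧ (hasB A i 7 = true ∨ hasB A i 8 = true)) := by
      rintro ⟨f1, f2, f3⟩
      have := hc.hf f1 i (by rintro rfl; exact absurd hi (by decide))
        (by rintro rfl; exact absurd hi (by decide)) (by omega)
      rw [e1, e2] at f3
      rcases f3 with f3 | f3
      · exact hA _ _ f3 this.1
      · exact hA _ _ f3 this.2
    rcases hj2 with rfl | rfl
    · have a1 := hc.ha
      have a2 := hc.hDa
      rcases hcon with hcon | hcon | hcon | hcon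
      · omega
      · have hcon : p.Da + 1 ≤ pop (row P (7 : Fin 9)) := hcon
        omega
      · omega
      · exact hf hcon
    · have a1 := hc.hb
      have a2 := hc.hD 8 (by decide)
      rcases hcon with hcon | hcon | hcon | hcon
      · omega
      · have hcon : p.D + 1 ≤ pop (row P (8 : Fin 9)) := hcon
        omega
      · omega
      · exact hf hcon
theorem minor_map {W V V' : Type*} {H : SimpleGraph W} {G : SimpleGraph V} {G' : SimpleGraph V'}
    (φ : V → V') (hφ : Function.Injective φ) (hadj : ∀ x y, G.Adj x y → G'.Adj (φ x) (φ y))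
    (h : H.IsMinor G) : H.IsMinor G' := by
  obtain ⟨f, h1, h2, h3, h4⟩ := h
  refine ⟨fun w => Set.image φ (f w), fun w => (h1 w).image φ, fun w => ?_, fun a b hab => ?_, ?_⟩
  · let F : G.induce (f w) →g G'.induce (Set.image φ (f w)) :=
      { toFun := fun x => ⟨φ x.1, x.1, x.2, rfl⟩
        map_rel' := fun {a b} hab => hadj _ _ hab }
    refine (h2 w).map F ?_
    rintro ⟨_, x, hx, rfl⟩
    exact ⟨⟨x, hx⟩, rfl⟩
  · exact (Set.disjoint_image_iff hφ).2 (h3 hab)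
  · intro w1 w2 hw
    obtain ⟨a, ha, b, hb, hab⟩ := h4 hw
    exact ⟨φ a, ⟨a, ha, rfl⟩, φ b, ⟨b, hb, rfl⟩, hadj _ _ hab⟩

theorem twoApex_of_equiv {V V' : Type*} {G : SimpleGraph V} {G' : SimpleGraph V'} (φ : V ≃ V')
    (hadj : ∀ x y, G.Adj x y → G'.Adj (φ x) (φ y)) (h : G'.TwoApex) : G.TwoApex := by
  obtain ⟨s, hs, hp⟩ := h
  refine ⟨Set.preimage φ s, ?_, ?_⟩
  · rw [← Set.ncard_image_of_injective _ φ.injective, Set.image_preimage_eq _ φ.surjective]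
    exact hs
  · let ψ : ((Set.preimage φ s)ᶜ : Set V) → (sᶜ : Set V') := fun x => ⟨φ x.1, x.2⟩
    have hψ : Function.Injective ψ := by
      rintro ⟨x, hx⟩ ⟨y, hy⟩ hxy
      have : φ x = φ y := congrArg Subtype.val hxy
      exact Subtype.ext (φ.injective this)
    exact ⟨fun hm => hp.1 (minor_map ψ hψ (fun x y hxy => hadj _ _ hxy) hm),
      fun hm => hp.2 (minor_map ψ hψ (fun x y hxy => hadj _ _ hxy) hm)⟩

/-- `H` contains one of the four patterns -/
def HasPat {W : Type*} (H : SimpleGraph W) : Prop :=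
  ∃ g : Fin 7 → W, Function.Injective g ∧ ∃ p ∈ pats, ∀ i j : Fin 7,
    ((i : ℕ), (j : ℕ)) ∈ p → H.Adj (g i) (g j)

theorem vec7_inj {W : Type*} {a b c d e f g : W} (h : [a, b, c, d, e, f, g].Nodup) :
    Function.Injective ![a, b, c, d, e, f, g] := by
  have := List.nodup_iff_injective_get.1 h
  intro i j hij
  have key : ∀ i : Fin 7, ![a, b, c, d, e, f, g] i = [a, b, c, d, e, f, g].get i := by
    intro i; fin_cases i <;> rfl
  rw [key, key] at hij
  exact this hij

theorem hasPat0 {W : Type*} {H : SimpleGraph W} (a b c d e f g : W)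
    (h : [a, b, c, d, e, f, g].Nodup)
    (h1 : H.Adj a d) (h2 : H.Adj a e) (h3 : H.Adj a f) (h4 : H.Adj b d) (h5 : H.Adj b e)
    (h6 : H.Adj b f) (h7 : H.Adj c d) (h8 : H.Adj c e) (h9 : H.Adj c f) : HasPat H := by
  refine ⟨_, vec7_inj h, pat0, by simp [pats], ?_⟩
  rintro ⟨i, hi⟩ ⟨j, hj⟩ hij
  simp only [pat0, List.mem_cons, Prod.mk.injEq, List.not_mem_nil, or_false] at hij
  rcases hij with ⟨rfl, rfl⟩ | ⟨rfl, rfl⟩ | ⟨rfl, rfl⟩ | ⟨rfl, rfl⟩ | ⟨rfl, rfl⟩ | ⟨rfl, rfl⟩ | ⟨rfl, rfl⟩ | ⟨rfl, rfl⟩ | ⟨rfl, rfl⟩ <;>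
    assumption

theorem hasPat1 {W : Type*} {H : SimpleGraph W} (a b c d e f g : W)
    (h : [a, b, c, d, e, f, g].Nodup)
    (h0 : H.Adj a g) (h1 : H.Adj d g) (h2 : H.Adj a e) (h3 : H.Adj a f) (h4 : H.Adj b d) (h5 : H.Adj b e)
    (h6 : H.Adj b f) (h7 : H.Adj c d) (h8 : H.Adj c e) (h9 : H.Adj c f) : HasPat H := by
  refine ⟨_, vec7_inj h, pat1, by simp [pats], ?_⟩
  rintro ⟨i, hi⟩ ⟨j, hj⟩ hij
  simp only [pat1, List.mem_cons, Prod.mk.injEq, List.not_mem_nil, or_false] at hij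
  rcases hij with ⟨rfl, rfl⟩ | ⟨rfl, rfl⟩ | ⟨rfl, rfl⟩ | ⟨rfl, rfl⟩ | ⟨rfl, rfl⟩ | ⟨rfl, rfl⟩ | ⟨rfl, rfl⟩ | ⟨rfl, rfl⟩ | ⟨rfl, rfl⟩ | ⟨rfl, rfl⟩ <;>
    assumption

theorem hasPat2 {W : Type*} {H : SimpleGraph W} (a b c d e f g : W)
    (h : [a, b, c, d, e, f, g].Nodup)
    (h0 : H.Adj a b) (h1 : H.Adj a c) (h2 : H.Adj a d) (h3 : H.Adj a e) (h4 : H.Adj b c) (h5 : H.Adj b d)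
    (h6 : H.Adj b e) (h7 : H.Adj c d) (h8 : H.Adj c e) (h9 : H.Adj d e) : HasPat H := by
  refine ⟨_, vec7_inj h, pat2, by simp [pats], ?_⟩
  rintro ⟨i, hi⟩ ⟨j, hj⟩ hij
  simp only [pat2, List.mem_cons, Prod.mk.injEq, List.not_mem_nil, or_false] at hij
  rcases hij with ⟨rfl, rfl⟩ | ⟨rfl, rfl⟩ | ⟨rfl, rfl⟩ | ⟨rfl, rfl⟩ | ⟨rfl, rfl⟩ | ⟨rfl, rfl⟩ | ⟨rfl, rfl⟩ | ⟨rfl, rfl⟩ | ⟨rfl, rfl⟩ | ⟨rfl, rfl⟩ <;>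
    assumption

theorem hasPat3 {W : Type*} {H : SimpleGraph W} (a b c d e f g : W)
    (h : [a, b, c, d, e, f, g].Nodup)
    (h0 : H.Adj a f) (h0' : H.Adj b f) (h1 : H.Adj a c) (h2 : H.Adj a d) (h3 : H.Adj a e) (h4 : H.Adj b c)
    (h5 : H.Adj b d)
    (h6 : H.Adj b e) (h7 : H.Adj c d) (h8 : H.Adj c e) (h9 : H.Adj d e) : HasPat H := by
  refine ⟨_, vec7_inj h, pat3, by simp [pats], ?_⟩
  rintro ⟨i, hi⟩ ⟨j, hj⟩ hij
  simp only [pat3, List.mem_cons, Prod.mk.injEq, List.not_mem_nil, or_false] at hij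
  rcases hij with ⟨rfl, rfl⟩ | ⟨rfl, rfl⟩ | ⟨rfl, rfl⟩ | ⟨rfl, rfl⟩ | ⟨rfl, rfl⟩ | ⟨rfl, rfl⟩ | ⟨rfl, rfl⟩ | ⟨rfl, rfl⟩ | ⟨rfl, rfl⟩ | ⟨rfl, rfl⟩ | ⟨rfl, rfl⟩ <;>
    assumption

theorem exists_new {W : Type*} [Fintype W] (l : List W) (h : l.length < Fintype.card W) : ∃ z, z ∉ l := by
  classical
  by_contra hcon
  push Not at hcon
  have : (Finset.univ : Finset W) ⊆ l.toFinset := fun z _ => by simp [hcon z]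
  have := Finset.card_le_card this
  have h2 := List.toFinset_card_le l
  rw [Finset.card_univ] at this
  omega

/-- a connected set with at most two elements -/
theorem small_set {W : Type*} [Fintype W] {H : SimpleGraph W} {s : Set W}
    (hc : (H.induce s).Connected) (hs : s.ncard ≤ 2) :
    (∃ x, s = {x}) ∨ ∃ x y, x ≠ y ∧ s = {x, y} ∧ H.Adj x y := by
  obtain ⟨⟨x, hx⟩⟩ := hc.nonempty
  have h1 : 0 < s.ncard := (Set.ncard_pos (Set.toFinite _)).2 ⟨x, hx⟩
  rcases (show s.ncard = 1 ∨ s.ncard = 2 by omega) with h | h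
  · exact Or.inl (Set.ncard_eq_one.1 h)
  · right
    obtain ⟨x, y, hxy, rfl⟩ := Set.ncard_eq_two.1 h
    refine ⟨x, y, hxy, rfl, ?_⟩
    have : Nontrivial ({x, y} : Set W) := ⟨⟨x, by simp⟩, ⟨y, by simp⟩, by simpa using hxy⟩
    obtain ⟨⟨z, hz⟩, hadj⟩ := hc.preconnected.exists_adj_of_nontrivial ⟨x, by simp⟩
    have hadj : H.Adj x z := hadj
    rcases hz with rfl | rfl
    · exact absurd hadj (H.loopless.irrefl _)
    · exact hadj

/-- at most one branch set is not a singleton -/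
theorem almost_single {ι W : Type*} [Fintype ι] [Nonempty ι] [Fintype W] (f : ι → Set W)
    (h1 : ∀ w, (f w).Nonempty) (h3 : Pairwise fun a b => Disjoint (f a) (f b))
    (hc : ∑ w, (f w).ncard ≤ Fintype.card ι + 1) :
    ∃ w0, (f w0).ncard ≤ 2 ∧ ∀ w, w ≠ w0 → ∃ x, f w = {x} := by
  classical
  have hpos : ∀ w, 1 ≤ (f w).ncard := fun w => (Set.ncard_pos (Set.toFinite _)).2 (h1 w)
  obtain ⟨w0, hw0⟩ := Finite.exists_max fun w => (f w).ncard
  have hsum : ∀ w, w ≠ w0 → (f w).ncard + (f w0).ncard ≤ 3 := by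
    intro w hw
    have hsub : ∑ u ∈ ({w, w0} : Finset ι), ((f u).ncard - 1) ≤ ∑ u, ((f u).ncard - 1) :=
      Finset.sum_le_sum_of_subset (Finset.subset_univ _)
    rw [Finset.sum_pair hw] at hsub
    have : ∑ u, ((f u).ncard - 1) + ∑ u : ι, 1 = ∑ u, (f u).ncard := by
      rw [← Finset.sum_add_distrib]
      exact Finset.sum_congr rfl fun u _ => by have := hpos u; omega
    simp only [Finset.sum_const, Finset.card_univ, smul_eq_mul, mul_one] at this
    have := hpos w
    have := hpos w0
    omega
  refine ⟨w0, ?_, fun w hw => ?_⟩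
  · have hsub : (f w0).ncard - 1 ≤ ∑ u, ((f u).ncard - 1) :=
      Finset.single_le_sum (f := fun u => (f u).ncard - 1) (fun _ _ => Nat.zero_le _) (Finset.mem_univ w0)
    have : ∑ u, ((f u).ncard - 1) + ∑ u : ι, 1 = ∑ u, (f u).ncard := by
      rw [← Finset.sum_add_distrib]
      exact Finset.sum_congr rfl fun u _ => by have := hpos u; omega
    simp only [Finset.sum_const, Finset.card_univ, smul_eq_mul, mul_one] at this
    omega
  · apply Set.ncard_eq_one.1
    have := hsum w hw
    have := hpos w
    have := hw0 w
    omega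

theorem sum_ncard_le {ι W : Type*} [Fintype ι] [Fintype W] (f : ι → Set W)
    (h3 : Pairwise fun a b => Disjoint (f a) (f b)) : ∑ w, (f w).ncard ≤ Fintype.card W := by
  classical
  have h : ∀ w, (f w).ncard = (f w).toFinset.card := fun w => Set.ncard_eq_toFinset_card' _
  simp only [h]
  rw [← Finset.card_biUnion]
  · exact Finset.card_le_univ _
  · intro a _ b _ hab
    exact Set.disjoint_toFinset.2 (h3 hab)

theorem minor_single {ι W : Type*} [Fintype ι] [Nonempty ι] [Fintype W] {K : SimpleGraph ι} {H : SimpleGraph W}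
    (f : ι → Set W) (h1 : ∀ w, (f w).Nonempty) (h2 : ∀ w, (H.induce (f w)).Connected)
    (h3 : Pairwise fun a b => Disjoint (f a) (f b))
    (h4 : ∀ ⦃w₁ w₂⦄, K.Adj w₁ w₂ → ∃ v₁ ∈ f w₁, ∃ v₂ ∈ f w₂, H.Adj v₁ v₂)
    (hc : ∑ w, (f w).ncard ≤ Fintype.card ι + 1) :
    ∃ (w0 : ι) (S : Set W) (x : ι → W),
      ((∃ x, S = {x}) ∨ ∃ x y, x ≠ y ∧ S = {x, y} ∧ H.Adj x y) ∧
      (∀ i j, i ≠ w0 → j ≠ w0 → i ≠ j → x i ≠ x j) ∧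
      (∀ i, i ≠ w0 → x i ∉ S) ∧
      (∀ i j, i ≠ w0 → j ≠ w0 → K.Adj i j → H.Adj (x i) (x j)) ∧
      (∀ i, i ≠ w0 → K.Adj w0 i → ∃ s ∈ S, H.Adj s (x i)) := by
  classical
  obtain ⟨w0, hw0, hs⟩ := almost_single f h1 h3 hc
  have hne : Nonempty W := ⟨(h1 w0).some⟩
  choose! x hx using hs
  refine ⟨w0, f w0, x, small_set (h2 w0) hw0, ?_, ?_, ?_, ?_⟩
  · intro i j hi hj hij he
    have := h3 hij
    simp only [hx i hi, hx j hj, he] at this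
    simp at this
  · intro i hi hmem
    have := h3 hi
    simp only [hx i hi] at this
    simp only [Set.disjoint_singleton_left] at this
    exact this hmem
  · intro i j hi hj hij
    obtain ⟨a, ha, b, hb, hab⟩ := h4 hij
    rw [hx i hi] at ha
    rw [hx j hj] at hb
    rw [Set.mem_singleton_iff] at ha hb
    rwa [ha, hb] at hab
  · intro i hi hij
    obtain ⟨a, ha, b, hb, hab⟩ := h4 hij
    rw [hx i hi] at hb
    rw [Set.mem_singleton_iff] at hb
    rw [hb] at hab
    exact ⟨a, ha, hab⟩

theorem k33_core {W : Type*} [Fintype W] {H : SimpleGraph W} (hW : Fintype.card W = 7) {S : Set W}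
    (hS : (∃ x, S = {x}) ∨ ∃ x y, x ≠ y ∧ S = {x, y} ∧ H.Adj x y)
    (b c d e f : W) (hnd : [b, c, d, e, f].Nodup)
    (hb : b ∉ S) (hc : c ∉ S) (hd : d ∉ S) (he : e ∉ S) (hf : f ∉ S)
    (h4 : H.Adj b d) (h5 : H.Adj b e) (h6 : H.Adj b f) (h7 : H.Adj c d) (h8 : H.Adj c e) (h9 : H.Adj c f)
    (h1 : ∃ s ∈ S, H.Adj s d) (h2 : ∃ s ∈ S, H.Adj s e) (h3 : ∃ s ∈ S, H.Adj s f) : HasPat H := by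
  rcases hS with ⟨x, rfl⟩ | ⟨x, y, hxy, rfl, hadj⟩
  · simp only [Set.mem_singleton_iff, exists_eq_left] at *
    obtain ⟨z, hz⟩ := exists_new [x, b, c, d, e, f] (by rw [hW]; simp)
    refine hasPat0 x b c d e f z ?_ h1 h2 h3 h4 h5 h6 h7 h8 h9
    simp only [List.nodup_cons, List.mem_cons, List.not_mem_nil] at *
    grind
  · have hadj' := hadj.symm
    simp only [Set.mem_insert_iff, Set.mem_singleton_iff, exists_eq_or_imp, exists_eq_left, not_or] at *
    have n1 : [x, b, c, d, e, f, y].Nodup := by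
      simp only [List.nodup_cons, List.mem_cons, List.not_mem_nil] at *
      grind
    have n2 : [y, b, c, d, e, f, x].Nodup := by
      simp only [List.nodup_cons, List.mem_cons, List.not_mem_nil] at *
      grind
    have n3 : [x, b, c, e, d, f, y].Nodup := by
      simp only [List.nodup_cons, List.mem_cons, List.not_mem_nil] at *
      grind
    have n4 : [y, b, c, e, d, f, x].Nodup := by
      simp only [List.nodup_cons, List.mem_cons, List.not_mem_nil] at *
      grind
    have n5 : [x, b, c, f, d, e, y].Nodup := by
      simp only [List.nodup_cons, List.mem_cons, List.not_mem_nil] at *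
      grind
    have n6 : [y, b, c, f, d, e, x].Nodup := by
      simp only [List.nodup_cons, List.mem_cons, List.not_mem_nil] at *
      grind
    rcases h1 with h1 | h1 <;> rcases h2 with h2 | h2 <;> rcases h3 with h3 | h3
    · exact hasPat0 _ _ _ _ _ _ _ n1 h1 h2 h3 h4 h5 h6 h7 h8 h9
    · exact hasPat1 _ _ _ _ _ _ _ n5 hadj h3.symm h1 h2 h6 h4 h5 h9 h7 h8
    · exact hasPat1 _ _ _ _ _ _ _ n3 hadj h2.symm h1 h3 h5 h4 h6 h8 h7 h9
    · exact hasPat1 _ _ _ _ _ _ _ n2 hadj' h1.symm h2 h3 h4 h5 h6 h7 h8 h9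
    · exact hasPat1 _ _ _ _ _ _ _ n1 hadj h1.symm h2 h3 h4 h5 h6 h7 h8 h9
    · exact hasPat1 _ _ _ _ _ _ _ n4 hadj' h2.symm h1 h3 h5 h4 h6 h8 h7 h9
    · exact hasPat1 _ _ _ _ _ _ _ n6 hadj' h3.symm h1 h2 h6 h4 h5 h9 h7 h8
    · exact hasPat0 _ _ _ _ _ _ _ n2 h1 h2 h3 h4 h5 h6 h7 h8 h9

theorem hasPat_k33 {W : Type*} [Fintype W] {H : SimpleGraph W} (hW : Fintype.card W = 7)
    (h : (completeBipartiteGraph (Fin 3) (Fin 3)).IsMinor H) : HasPat H := by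
  obtain ⟨f, h1, h2, h3, h4⟩ := h
  have hs := sum_ncard_le f h3
  obtain ⟨w0, S, x, hS, k1, k2, k3, k4⟩ := minor_single f h1 h2 h3 h4 (by rw [hW] at hs; simpa using hs)
  have e3 : ∀ i : Fin 3, ∃ j k, j ≠ i ∧ k ≠ i ∧ j ≠ k := by decide
  rcases w0 with i | i
  · obtain ⟨j, k, hj, hk, hjk⟩ := e3 i
    have hj' : (Sum.inl j : Fin 3 ⊕ Fin 3) ≠ Sum.inl i := by simpa using hj
    have hk' : (Sum.inl k : Fin 3 ⊕ Fin 3) ≠ Sum.inl i := by simpa using hk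
    have hr : ∀ m : Fin 3, (Sum.inr m : Fin 3 ⊕ Fin 3) ≠ Sum.inl i := by simp
    refine k33_core hW hS (x (Sum.inl j)) (x (Sum.inl k)) (x (Sum.inr 0)) (x (Sum.inr 1)) (x (Sum.inr 2)) ?_
      (k2 _ hj') (k2 _ hk') (k2 _ (hr _)) (k2 _ (hr _)) (k2 _ (hr _))
      (k3 _ _ hj' (hr _) (by simp)) (k3 _ _ hj' (hr _) (by simp)) (k3 _ _ hj' (hr _) (by simp))
      (k3 _ _ hk' (hr _) (by simp)) (k3 _ _ hk' (hr _) (by simp)) (k3 _ _ hk' (hr _) (by simp))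
      (k4 _ (hr _) (by simp)) (k4 _ (hr _) (by simp)) (k4 _ (hr _) (by simp))
    have a1 := k1 _ _ hj' hk' (by simpa using hjk)
    have a2 := fun m => k1 _ _ hj' (hr m) (by simp)
    have a3 := fun m => k1 _ _ hk' (hr m) (by simp)
    have a4 := k1 _ _ (hr 0) (hr 1) (by simp)
    have a5 := k1 _ _ (hr 0) (hr 2) (by simp)
    have a6 := k1 _ _ (hr 1) (hr 2) (by simp)
    simp [a1, a2, a3, a4, a5, a6]
  · obtain ⟨j, k, hj, hk, hjk⟩ := e3 i
    have hj' : (Sum.inr j : Fin 3 ⊕ Fin 3) ≠ Sum.inr i := by simpa using hj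
    have hk' : (Sum.inr k : Fin 3 ⊕ Fin 3) ≠ Sum.inr i := by simpa using hk
    have hr : ∀ m : Fin 3, (Sum.inl m : Fin 3 ⊕ Fin 3) ≠ Sum.inr i := by simp
    refine k33_core hW hS (x (Sum.inr j)) (x (Sum.inr k)) (x (Sum.inl 0)) (x (Sum.inl 1)) (x (Sum.inl 2)) ?_
      (k2 _ hj') (k2 _ hk') (k2 _ (hr _)) (k2 _ (hr _)) (k2 _ (hr _))
      (k3 _ _ hj' (hr _) (by simp)) (k3 _ _ hj' (hr _) (by simp)) (k3 _ _ hj' (hr _) (by simp))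
      (k3 _ _ hk' (hr _) (by simp)) (k3 _ _ hk' (hr _) (by simp)) (k3 _ _ hk' (hr _) (by simp))
      (k4 _ (hr _) (by simp)) (k4 _ (hr _) (by simp)) (k4 _ (hr _) (by simp))
    have a1 := k1 _ _ hj' hk' (by simpa using hjk)
    have a2 := fun m => k1 _ _ hj' (hr m) (by simp)
    have a3 := fun m => k1 _ _ hk' (hr m) (by simp)
    have a4 := k1 _ _ (hr 0) (hr 1) (by simp)
    have a5 := k1 _ _ (hr 0) (hr 2) (by simp)
    have a6 := k1 _ _ (hr 1) (hr 2) (by simp)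
    simp [a1, a2, a3, a4, a5, a6]

theorem k5_three {W : Type*} [Fintype W] {H : SimpleGraph W} {x y a b c d : W}
    (hnd : [x, a, b, c, d, y].Nodup) (hW : Fintype.card W = 7) (hxy : H.Adj x y)
    (hab : H.Adj a b) (hac : H.Adj a c) (had : H.Adj a d) (hbc : H.Adj b c) (hbd : H.Adj b d) (hcd : H.Adj c d)
    (h1 : H.Adj y a) (h2 : H.Adj x b) (h3 : H.Adj x c) (h4 : H.Adj x d) : HasPat H := by
  obtain ⟨z, hz⟩ := exists_new [x, a, b, c, d, y] (by rw [hW]; simp)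
  refine hasPat3 x a b c d y z ?_ hxy h1.symm h2 h3 h4 hab hac had hbc hbd hcd
  simp only [List.nodup_cons, List.mem_cons, List.not_mem_nil] at *
  grind

theorem k5_two {W : Type*} [Fintype W] {H : SimpleGraph W} {x y a b c d : W}
    (hnd : [x, a, b, c, d, y].Nodup) (hW : Fintype.card W = 7) (hxy : H.Adj x y)
    (hac : H.Adj a c) (had : H.Adj a d) (hbc : H.Adj b c) (hbd : H.Adj b d)
    (h1 : H.Adj y c) (h2 : H.Adj x a) (h3 : H.Adj x b) (h4 : H.Adj y d) : HasPat H := by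
  obtain ⟨z, hz⟩ := exists_new [x, a, b, c, d, y] (by rw [hW]; simp)
  refine hasPat0 x c d y a b z ?_ hxy h2 h3 h1.symm hac.symm hbc.symm h4.symm had.symm hbd.symm
  simp only [List.nodup_cons, List.mem_cons, List.not_mem_nil] at *
  grind

theorem k5_four {W : Type*} [Fintype W] {H : SimpleGraph W} {x a b c d : W}
    (hnd : [x, a, b, c, d].Nodup) (hW : Fintype.card W = 7)
    (hab : H.Adj a b) (hac : H.Adj a c) (had : H.Adj a d) (hbc : H.Adj b c) (hbd : H.Adj b d) (hcd : H.Adj c d)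
    (h1 : H.Adj x a) (h2 : H.Adj x b) (h3 : H.Adj x c) (h4 : H.Adj x d) : HasPat H := by
  obtain ⟨z, hz⟩ := exists_new [x, a, b, c, d] (by rw [hW]; simp)
  obtain ⟨z', hz'⟩ := exists_new [x, a, b, c, d, z] (by rw [hW]; simp)
  refine hasPat2 x a b c d z z' ?_ h1 h2 h3 h4 hab hac had hbc hbd hcd
  simp only [List.nodup_cons, List.mem_cons, List.not_mem_nil] at *
  grind

theorem k5_core {W : Type*} [Fintype W] {H : SimpleGraph W} (hW : Fintype.card W = 7) {S : Set W}
    (hS : (∃ x, S = {x}) ∨ ∃ x y, x ≠ y ∧ S = {x, y} ∧ H.Adj x y)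
    (a b c d : W) (hnd : [a, b, c, d].Nodup)
    (ha : a ∉ S) (hb : b ∉ S) (hc : c ∉ S) (hd : d ∉ S)
    (hab : H.Adj a b) (hac : H.Adj a c) (had : H.Adj a d) (hbc : H.Adj b c) (hbd : H.Adj b d) (hcd : H.Adj c d)
    (h1 : ∃ s ∈ S, H.Adj s a) (h2 : ∃ s ∈ S, H.Adj s b) (h3 : ∃ s ∈ S, H.Adj s c)
    (h4 : ∃ s ∈ S, H.Adj s d) : HasPat H := by
  rcases hS with ⟨x, rfl⟩ | ⟨x, y, hxy, rfl, hadj⟩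
  · simp only [Set.mem_singleton_iff, exists_eq_left] at *
    refine k5_four ?_ hW hab hac had hbc hbd hcd h1 h2 h3 h4
    simp only [List.nodup_cons, List.mem_cons, List.not_mem_nil] at *
    grind
  · have hadj' := hadj.symm
    simp only [Set.mem_insert_iff, Set.mem_singleton_iff, exists_eq_or_imp, exists_eq_left, not_or] at *
    have h0 : [x, y, a, b, c, d].Nodup := by
      simp only [List.nodup_cons, List.mem_cons, List.not_mem_nil] at *
      grind
    simp only [List.nodup_cons, List.mem_cons, List.not_mem_nil] at h0
    have n4 : ∀ u, u = x ∨ u = y → [u, a, b, c, d].Nodup := by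
      intro u hu
      simp only [List.nodup_cons, List.mem_cons, List.not_mem_nil] at *
      grind
    rcases h1 with h1 | h1 <;> rcases h2 with h2 | h2 <;> rcases h3 with h3 | h3 <;> rcases h4 with h4 | h4
    · exact k5_four (n4 x (by simp)) hW hab hac had hbc hbd hcd h1 h2 h3 h4
    · exact k5_three (by simp only [List.nodup_cons, List.mem_cons, List.not_mem_nil]; grind) hW hadj had.symm hbd.symm hcd.symm hab hac hbc h4 h1 h2 h3
    · exact k5_three (by simp only [List.nodup_cons, List.mem_cons, List.not_mem_nil]; grind) hW hadj hac.symm hbc.symm hcd hab had hbd h3 h1 h2 h4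
    · exact k5_two (by simp only [List.nodup_cons, List.mem_cons, List.not_mem_nil]; grind) hW hadj hac had hbc hbd h3 h1 h2 h4
    · exact k5_three (by simp only [List.nodup_cons, List.mem_cons, List.not_mem_nil]; grind) hW hadj hab.symm hbc hbd hac had hcd h2 h1 h3 h4
    · exact k5_two (by simp only [List.nodup_cons, List.mem_cons, List.not_mem_nil]; grind) hW hadj hab had hbc.symm hcd h2 h1 h3 h4
    · exact k5_two (by simp only [List.nodup_cons, List.mem_cons, List.not_mem_nil]; grind) hW hadj hab hac hbd.symm hcd.symm h2 h1 h4 h3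
    · exact k5_three (by simp only [List.nodup_cons, List.mem_cons, List.not_mem_nil]; grind) hW hadj' hab hac had hbc hbd hcd h1 h2 h3 h4
    · exact k5_three (by simp only [List.nodup_cons, List.mem_cons, List.not_mem_nil]; grind) hW hadj hab hac had hbc hbd hcd h1 h2 h3 h4
    · exact k5_two (by simp only [List.nodup_cons, List.mem_cons, List.not_mem_nil]; grind) hW hadj' hab hac hbd.symm hcd.symm h2 h1 h4 h3
    · exact k5_two (by simp only [List.nodup_cons, List.mem_cons, List.not_mem_nil]; grind) hW hadj' hab had hbc.symm hcd h2 h1 h3 h4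
    · exact k5_three (by simp only [List.nodup_cons, List.mem_cons, List.not_mem_nil]; grind) hW hadj' hab.symm hbc hbd hac had hcd h2 h1 h3 h4
    · exact k5_two (by simp only [List.nodup_cons, List.mem_cons, List.not_mem_nil]; grind) hW hadj' hac had hbc hbd h3 h1 h2 h4
    · exact k5_three (by simp only [List.nodup_cons, List.mem_cons, List.not_mem_nil]; grind) hW hadj' hac.symm hbc.symm hcd hab had hbd h3 h1 h2 h4
    · exact k5_three (by simp only [List.nodup_cons, List.mem_cons, List.not_mem_nil]; grind) hW hadj' had.symm hbd.symm hcd.symm hab hac hbc h4 h1 h2 h3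
    · exact k5_four (n4 y (by simp)) hW hab hac had hbc hbd hcd h1 h2 h3 h4

open Classical in
theorem sum_parts {ι W : Type*} [Fintype ι] [Fintype W] (f : ι → Set W)
    (h3 : Pairwise fun a b => Disjoint (f a) (f b)) (F : W → ℕ) :
    ∑ i, ∑ v ∈ (f i).toFinset, F v ≤ ∑ v, F v := by
  rw [← Finset.sum_biUnion]
  · exact Finset.sum_le_sum_of_subset (Finset.subset_univ _)
  · intro a _ b _ hab
    exact Set.disjoint_toFinset.2 (h3 hab)

open Classical in
theorem conn_edges {W : Type*} [Fintype W] {H : SimpleGraph W} {s : Set W}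
    (hc : (H.induce s).Connected) :
    2 * s.ncard ≤ 2 + ∑ v ∈ s.toFinset, ∑ w ∈ s.toFinset, if H.Adj v w then 1 else 0 := by
  have h1 := hc.card_vert_le_card_edgeSet_add_one
  have h2 := (H.induce s).sum_degrees_eq_twice_card_edges
  have h3 : ∀ v : s, (H.induce s).degree v = ∑ w ∈ s.toFinset, if H.Adj v w then 1 else 0 := by
    intro v
    rw [← SimpleGraph.card_neighborFinset_eq_degree, SimpleGraph.neighborFinset_eq_filter, Finset.card_filter]
    rw [← Finset.sum_coe_sort s.toFinset]
    refine Fintype.sum_equiv (Equiv.subtypeEquivRight (by simp)) _ _ ?_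
    intro w
    simp
  have h4 : ∑ v : s, (H.induce s).degree v =
      ∑ v ∈ s.toFinset, ∑ w ∈ s.toFinset, if H.Adj v w then 1 else 0 := by
    rw [← Finset.sum_coe_sort s.toFinset]
    refine Fintype.sum_equiv (Equiv.subtypeEquivRight (by simp)) _ _ ?_
    intro w
    rw [h3]
    simp
  rw [← h4, h2]
  have h5 : Nat.card s = s.ncard := rfl
  have h6 : Nat.card (H.induce s).edgeSet = (H.induce s).edgeFinset.card := by
    rw [Nat.card_eq_fintype_card, SimpleGraph.edgeFinset_card]
  rw [h5, h6] at h1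
  omega

open Classical in
theorem hasPat_k5 {W : Type*} [Fintype W] {H : SimpleGraph W} (hW : Fintype.card W = 7)
    (hE : (∑ v, ∑ w, if H.Adj v w then 1 else 0) ≤ 22)
    (h : (⊤ : SimpleGraph (Fin 5)).IsMinor H) : HasPat H := by
  obtain ⟨f, h1, h2, h3, h4⟩ := h
  have hs := sum_ncard_le f h3
  have hs6 : ∑ w, (f w).ncard ≤ 6 := by
    have e1 : ∑ i, ∑ j, ∑ v ∈ (f i).toFinset, ∑ w ∈ (f j).toFinset, (if H.Adj v w then 1 else 0) ≤ 22 := by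
      refine le_trans ?_ hE
      refine le_trans ?_ (sum_parts f h3 _)
      apply Finset.sum_le_sum
      intro i _
      rw [Finset.sum_comm]
      apply Finset.sum_le_sum
      intro v _
      exact sum_parts f h3 _
    have e2 : ∀ i j, (if i = j then 2 * (f i).ncard else 3) ≤
        2 + ∑ v ∈ (f i).toFinset, ∑ w ∈ (f j).toFinset, (if H.Adj v w then 1 else 0) := by
      intro i j
      split_ifs with hij
      · subst hij
        exact conn_edges (h2 i)
      · obtain ⟨a, ha, b, hb, hab⟩ := h4 (w₁ := i) (w₂ := j) hij
        have t1 : (1 : ℕ) ≤ ∑ w ∈ (f j).toFinset, (if H.Adj a w then 1 else 0) :=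
          le_trans (by simp [hab]) (Finset.single_le_sum (f := fun w => if H.Adj a w then 1 else 0)
            (fun _ _ => Nat.zero_le _) (Set.mem_toFinset.2 hb))
        have t2 := le_trans t1 (Finset.single_le_sum (f := fun v => ∑ w ∈ (f j).toFinset, if H.Adj v w then 1 else 0)
            (fun _ _ => Nat.zero_le _) (Set.mem_toFinset.2 ha))
        omega
    have e3 := Finset.sum_le_sum fun i (_ : i ∈ Finset.univ) =>
      Finset.sum_le_sum fun j (_ : j ∈ Finset.univ) => e2 i j
    simp only [Finset.sum_add_distrib] at e3
    have e4 : ∑ i : Fin 5, ∑ j : Fin 5, (if i = j then 2 * (f i).ncard else 3) = 60 + 2 * ∑ i, (f i).ncard := by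
      simp +decide [Fin.sum_univ_five]
      omega
    rw [e4] at e3
    simp at e3
    simp at e1
    omega
  obtain ⟨w0, S, x, hS, k1, k2, k3, k4⟩ := minor_single f h1 h2 h3 h4 (by simpa using hs6)
  have e5 : ∀ i : Fin 5, ∃ j k l m : Fin 5, j ≠ i ∧ k ≠ i ∧ l ≠ i ∧ m ≠ i ∧
    j ≠ k ∧ j ≠ l ∧ j ≠ m ∧ k ≠ l ∧ k ≠ m ∧ l ≠ m := by decide
  obtain ⟨j, k, l, m, hj, hk, hl, hm, jk, jl, jm, kl, km, lm⟩ := e5 w0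
  refine k5_core hW hS (x j) (x k) (x l) (x m) ?_ (k2 _ hj) (k2 _ hk) (k2 _ hl) (k2 _ hm)
    (k3 _ _ hj hk jk) (k3 _ _ hj hl jl) (k3 _ _ hj hm jm) (k3 _ _ hk hl kl) (k3 _ _ hk hm km) (k3 _ _ hl hm lm)
    (k4 _ hj hj.symm) (k4 _ hk hk.symm) (k4 _ hl hl.symm) (k4 _ hm hm.symm)
  simp [k1 _ _ hj hk jk, k1 _ _ hj hl jl, k1 _ _ hj hm jm, k1 _ _ hk hl kl, k1 _ _ hk hm km, k1 _ _ hl hm lm]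

open Classical in
theorem planar_of {W : Type*} [Fintype W] {H : SimpleGraph W} (hW : Fintype.card W = 7)
    (hE : (∑ v, ∑ w, if H.Adj v w then 1 else 0) ≤ 22) (h : ¬ HasPat H) : H.IsPlanar :=
  ⟨fun hm => h (hasPat_k5 hW hE hm), fun hm => h (hasPat_k33 hW hm)⟩

theorem sum_sub_le (s : Set (Fin 9)) [Fintype s] (F : Fin 9 → ℕ) : ∑ v : s, F v ≤ ∑ v, F v := by
  have : ∑ v : s, F v = ∑ v ∈ Finset.univ.map (Function.Embedding.subtype (· ∈ s)), F v := by
    rw [Finset.sum_map]; rfl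
  rw [this]
  exact Finset.sum_le_sum_of_subset (Finset.subset_univ _)

/-- neighbours in a pattern -/
def nbp (p : List (ℕ × ℕ)) (i : Fin 7) : Finset (Fin 7) :=
  Finset.univ.filter fun k => ((i : ℕ), (k : ℕ)) ∈ p ∨ ((k : ℕ), (i : ℕ)) ∈ p

theorem cnt_ge {k n M : ℕ} (h : Fin n → Fin 9) (hh : Function.Injective h)
    (hk : ∀ i, k ≤ pop (row M (h i))) : n ≤ cntGe k M := by
  have e : cntGe k M = ∑ i : Fin 9, if k ≤ pop (row M i) then 1 else 0 := by
    rw [cntGe, lsum9]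
    apply Finset.sum_congr rfl
    intro i _
    by_cases hi : k ≤ pop (row M i)
    · rw [if_pos hi, Nat.ble_eq_true_of_le hi]
    · rw [if_neg hi]
      have : Nat.ble k (pop (row M i)) = false := by
        rw [← Bool.not_eq_true, Nat.ble_eq]; exact hi
      rw [this]
  rw [e, Finset.sum_boole]
  have : (Finset.univ.image h) ⊆ Finset.univ.filter fun j : Fin 9 => k ≤ pop (row M j) := by
    intro y hy
    simp only [Finset.mem_image, Finset.mem_univ, true_and] at hy
    obtain ⟨i, rfl⟩ := hy
    simp [hk i]
  have := Finset.card_le_card this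
  rw [Finset.card_image_of_injective _ hh] at this
  simpa using this

theorem pat_deg {M : ℕ} {p : List (ℕ × ℕ)} (g : Fin 7 → Fin 9) (hg : Function.Injective g)
    (hM : ∀ i j : Fin 7, ((i : ℕ), (j : ℕ)) ∈ p →
      M.testBit (9 * g i + g j) = true ∧ M.testBit (9 * g j + g i) = true) (i : Fin 7) :
    (nbp p i).card ≤ pop (row M (g i)) := by
  refine pop_ge (row_lt _ _) (fun k => g ((nbp p i).orderEmbOfFin rfl k))
    (hg.comp ((nbp p i).orderEmbOfFin rfl).injective) ?_
  intro k
  have h := (nbp p i).orderEmbOfFin_mem rfl k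
  rw [row_testBit]
  generalize (nbp p i).orderEmbOfFin rfl k = u at *
  simp only [nbp, Finset.mem_filter, Finset.mem_univ, true_and] at h
  rcases h with h | h
  · exact (hM _ _ h).1
  · exact (hM _ _ h).2

theorem pat_cnt {M k : ℕ} {p : List (ℕ × ℕ)} (g : Fin 7 → Fin 9) (hg : Function.Injective g)
    (hM : ∀ i j : Fin 7, ((i : ℕ), (j : ℕ)) ∈ p →
      M.testBit (9 * g i + g j) = true ∧ M.testBit (9 * g j + g i) = true) :
    (Finset.univ.filter fun i => k ≤ (nbp p i).card).card ≤ cntGe k M := by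
  set T := Finset.univ.filter fun i => k ≤ (nbp p i).card with hT
  refine cnt_ge (fun j => g (T.orderEmbOfFin rfl j)) (hg.comp (T.orderEmbOfFin rfl).injective) ?_
  intro j
  have h := T.orderEmbOfFin_mem rfl j
  generalize T.orderEmbOfFin rfl j = u at *
  simp only [hT, Finset.mem_filter, Finset.mem_univ, true_and] at h
  exact le_trans h (pat_deg g hg hM u)

theorem three_inj {a b c : Fin 9} (h1 : a ≠ b) (h2 : a ≠ c) (h3 : b ≠ c) : Function.Injective ![a, b, c] := by
  intro i j hij
  fin_cases i <;> fin_cases j <;> simp_all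

theorem two_inj {a b : Fin 9} (h1 : a ≠ b) : Function.Injective ![a, b] := by
  intro i j hij
  fin_cases i <;> fin_cases j <;> simp_all

theorem mask_testBit : ∀ x j : Fin 9, x ≠ j → (Nat.xor 511 (Nat.shiftLeft 1 x)).testBit j = true := by
  decide +kernel

theorem tri_false {M : ℕ} (x y z a b c : Fin 9) (hyz : y < z) (hxy : x ≠ y) (hxz : x ≠ z)
    (hab : a ≠ b) (hac : a ≠ c) (hbc : b ≠ c) (xa : x ≠ a) (xb : x ≠ b) (xc : x ≠ c)
    (ya : M.testBit (9 * y + a) = true) (yb : M.testBit (9 * y + b) = true) (yc : M.testBit (9 * y + c) = true)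
    (za : M.testBit (9 * z + a) = true) (zb : M.testBit (9 * z + b) = true) (zc : M.testBit (9 * z + c) = true)
    (hb : M.testBit (9 * x + b) = true) (hc : M.testBit (9 * x + c) = true) : triTest M = false := by
  rw [← Bool.not_eq_true]
  intro h
  rw [← row_testBit] at ya yb yc za zb zc hb hc
  have p1 : 3 ≤ pop (row M y) := by
    refine pop_ge (row_lt _ _) _ (three_inj hab hac hbc) ?_
    intro i; fin_cases i <;> simp [ya, yb, yc]
  have p2 : 3 ≤ pop (Nat.land (row M y) (row M z)) := by
    refine pop_ge (land_lt _ _ (row_lt _ _)) _ (three_inj hab hac hbc) ?_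
    intro i; rw [land_testBit]; fin_cases i <;> simp [ya, yb, yc, za, zb, zc]
  have p3 : 2 ≤ pop (Nat.land (Nat.land (row M y) (row M z)) (row M x)) := by
    refine pop_ge (land_lt _ _ (land_lt _ _ (row_lt _ _))) _ (two_inj hbc) ?_
    intro i; rw [land_testBit, land_testBit]; fin_cases i <;> simp [yb, yc, zb, zc, hb, hc]
  have p4 : 3 ≤ pop (Nat.land (Nat.land (row M y) (row M z)) (Nat.xor 511 (Nat.shiftLeft 1 x))) := by
    refine pop_ge (land_lt _ _ (land_lt _ _ (row_lt _ _))) _ (three_inj hab hac hbc) ?_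
    intro i; rw [land_testBit, land_testBit]
    have ma := mask_testBit x a xa
    have mb := mask_testBit x b xb
    have mc := mask_testBit x c xc
    fin_cases i
    · simpa [ya, za] using ma
    · simpa [yb, zb] using mb
    · simpa [yc, zc] using mc
  simp only [triTest, lall_iff, force_eq, bor_eq, Bool.or_eq_true, Nat.ble_eq, Nat.beq_eq] at h
  rcases h _ (mem_L9 y) with h | h
  · omega
  rcases h _ (mem_L9 z) with h | h | h
  · exact absurd hyz (not_lt.2 h)
  · omega
  rcases h _ (mem_L9 x) with h | h | h | h
  · exact hxy (Fin.ext h)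
  · exact hxz (Fin.ext h)
  · omega
  · omega

open Classical in
theorem card7 (c d : Fin 9) (hcd : c ≠ d) : Fintype.card (({c, d} : Set (Fin 9))ᶜ : Set (Fin 9)) = 7 := by
  rw [Fintype.card_compl_set]
  simp [hcd]

open Classical in
theorem test_sound {G : SimpleGraph (Fin 9)} {M : ℕ} (c d : Fin 9) (hcd : c ≠ d)
    (hM : ∀ i j : Fin 9, i ≠ c → i ≠ d → j ≠ c → j ≠ d → G.Adj i j → M.testBit (9 * i + j) = true)
    (ht : test M = true) : (G.induce ({c, d} : Set (Fin 9))ᶜ).IsPlanar := by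
  simp only [test, band_eq, bor_eq, Bool.and_eq_true, Bool.or_eq_true, Nat.ble_eq] at ht
  obtain ⟨t1, t2, t3⟩ := ht
  have hM' : ∀ v w : (({c, d} : Set (Fin 9))ᶜ : Set (Fin 9)), G.Adj v w → M.testBit (9 * v.1 + w.1) = true := by
    rintro ⟨v, hv⟩ ⟨w, hw⟩ h
    simp only [Set.mem_compl_iff, Set.mem_insert_iff, Set.mem_singleton_iff, not_or] at hv hw
    exact hM v w hv.1 hv.2 hw.1 hw.2 h
  refine planar_of (card7 c d hcd) ?_ ?_
  · refine le_trans ?_ t1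
    rw [sumPop, lsum9]
    refine le_trans (Finset.sum_le_sum fun v _ => ?_) (sum_sub_le _ fun i => pop (row M i))
    rw [pop_eq (row_lt _ _)]
    refine le_trans (Finset.sum_le_sum fun w _ => ?_)
      (sum_sub_le _ fun j => if (row M v).testBit j = true then 1 else 0)
    rw [row_testBit]
    split_ifs with h1 h2
    · exact le_refl _
    · exact absurd (hM' v w h1) h2
    · simp
    · simp
  · rintro ⟨g, hg, p, hp, hgp⟩
    have hg' : Function.Injective fun i => (g i).1 := Subtype.val_injective.comp hg
    have hb : ∀ i j : Fin 7, ((i : ℕ), (j : ℕ)) ∈ p →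
        M.testBit (9 * (g i).1 + (g j).1) = true ∧ M.testBit (9 * (g j).1 + (g i).1) = true :=
      fun i j hij => ⟨hM' _ _ (hgp i j hij), hM' _ _ (hgp i j hij).symm⟩
    have c3 := pat_cnt (k := 3) (fun i => (g i).1) hg' hb
    have c4 := pat_cnt (k := 4) (fun i => (g i).1) hg' hb
    have ne : ∀ i j : Fin 7, i ≠ j → (g i).1 ≠ (g j).1 := fun i j hij h => hij (hg' h)
    have tri : (∀ i : Fin 7, i = 1 ∨ i = 2 → ∀ j : Fin 7, j = 3 ∨ j = 4 ∨ j = 5 → ((i : ℕ), (j : ℕ)) ∈ p) →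
        (0, 4) ∈ p → (0, 5) ∈ p → triTest M = false := by
      intro h1 h2 h3
      have h1' := fun i hi j hj => (hb i j (h1 i hi j hj)).1
      have h2' := (hb 0 4 h2).1
      have h3' := (hb 0 5 h3).1
      rcases lt_or_gt_of_ne (ne 1 2 (by decide)) with h | h
      · exact tri_false (g 0).1 (g 1).1 (g 2).1 (g 3).1 (g 4).1 (g 5).1 h (ne _ _ (by decide)) (ne _ _ (by decide))
          (ne _ _ (by decide)) (ne _ _ (by decide)) (ne _ _ (by decide)) (ne _ _ (by decide))
          (ne _ _ (by decide)) (ne _ _ (by decide)) (h1' _ (by simp) _ (by simp))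
          (h1' _ (by simp) _ (by simp)) (h1' _ (by simp) _ (by simp)) (h1' _ (by simp) _ (by simp))
          (h1' _ (by simp) _ (by simp)) (h1' _ (by simp) _ (by simp)) h2' h3'
      · exact tri_false (g 0).1 (g 2).1 (g 1).1 (g 3).1 (g 4).1 (g 5).1 h (ne _ _ (by decide)) (ne _ _ (by decide))
          (ne _ _ (by decide)) (ne _ _ (by decide)) (ne _ _ (by decide)) (ne _ _ (by decide))
          (ne _ _ (by decide)) (ne _ _ (by decide)) (h1' _ (by simp) _ (by simp))
          (h1' _ (by simp) _ (by simp)) (h1' _ (by simp) _ (by simp)) (h1' _ (by simp) _ (by simp))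
          (h1' _ (by simp) _ (by simp)) (h1' _ (by simp) _ (by simp)) h2' h3'
    simp only [pats, List.mem_cons, List.not_mem_nil, or_false] at hp
    rcases hp with rfl | rfl | rfl | rfl
    · have k3 : 6 ≤ (Finset.univ.filter fun i => 3 ≤ (nbp pat0 i).card).card := by decide
      have := tri (by decide) (by decide) (by decide)
      rw [this] at t3
      rcases t3 with t3 | t3
      · omega
      · exact absurd t3 (by simp)
    · have k3 : 6 ≤ (Finset.univ.filter fun i => 3 ≤ (nbp pat1 i).card).card := by decide
      have := tri (by decide) (by decide) (by decide)
      rw [this] at t3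
      rcases t3 with t3 | t3
      · omega
      · exact absurd t3 (by simp)
    · have k4 : 5 ≤ (Finset.univ.filter fun i => 4 ≤ (nbp pat2 i).card).card := by decide
      omega
    · have k4 : 5 ≤ (Finset.univ.filter fun i => 4 ≤ (nbp pat3 i).card).card := by decide
      omega

theorem good_sound {G : SimpleGraph (Fin 9)} {A : ℕ} (hA : No A G) (h : good A = true) : G.TwoApex := by
  simp only [good, lany_iff, force_eq, band_eq, Bool.and_eq_true, Nat.ble_eq] at h
  obtain ⟨c, hc, d, hd, hdc, ht⟩ := h
  have hc := lt_of_mem_L9 hc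
  have hd := lt_of_mem_L9 hd
  lift c to Fin 9 using hc
  lift d to Fin 9 using hd
  have hcd : c ≠ d := by rintro rfl; omega
  refine ⟨{c, d}, Set.ncard_pair hcd |>.le, test_sound c d hcd ?_ ht⟩
  intro i j h1 h2 h3 h4 hij
  have hA' : A.testBit (9 * i + j) = false := by
    rw [← Bool.not_eq_true]; exact fun h => hA i j h hij
  have hlt : 9 * (i : ℕ) + j < 81 := by omega
  rw [land_testBit, xor_testBit, xor_testBit, lor_testBit, inc_testBit, inc_testBit, full_testBit, hA']
  simp [h1, h2, h3, h4, hlt]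

theorem search_sound (p : Par) (G : SimpleGraph (Fin 9)) (hc : Cons p G) (l : List (ℕ × ℕ))
    (hl : ∀ e ∈ l, e.1 < e.2 ∧ e.1 < 7 ∧ e.2 < 9) : ∀ (P A : ℕ), Lo P G → No A G →
    search p l P A = true → G.TwoApex := by
  induction l with
  | nil => exact fun P A _ hA h => good_sound hA h
  | cons e t ih =>
    intro P A hP hA h
    have ih := ih fun e he => hl e (List.mem_cons_of_mem _ he)
    have h' : band
       (bor (hasB P e.1 e.2) (force (Nat.lor A (eb e.1 e.2)) fun A' =>
          bor (conf p e.1 e.2 P A') (search p t P A')))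
       (bor (hasB A e.1 e.2) (force (Nat.lor P (eb e.1 e.2)) fun P' =>
          bor (conf p e.1 e.2 P' A) (search p t P' A))) = true := h
    obtain ⟨i, j⟩ := e
    obtain ⟨h1, h2, h3⟩ := hl (i, j) (by simp)
    simp only at h1 h2 h3
    have h4 : i < 9 := by omega
    lift i to Fin 9 using h4
    lift j to Fin 9 using h3
    simp only [force_eq, bor_eq, band_eq, Bool.and_eq_true, Bool.or_eq_true, hasB_eq] at h'
    have hij : i < j := h1
    have hi7 : i < 7 := h2
    by_cases hadj : G.Adj i j
    · rcases h'.2 with h5 | h5 | h5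
      · exact absurd hadj (hA i j h5)
      · rw [conf_sound p G hc i j hij hi7 _ _ (Lo_lor hP hadj) hA] at h5
        exact absurd h5 (by simp)
      · exact ih _ _ (Lo_lor hP hadj) hA h5
    · rcases h'.1 with h5 | h5 | h5
      · exact absurd (hP i j h5) hadj
      · rw [conf_sound p G hc i j hij hi7 _ _ hP (No_lor hA hadj)] at h5
        exact absurd h5 (by simp)
      · exact ih _ _ hP (No_lor hA hadj) h5

theorem edges_ok : ∀ e ∈ edges, e.1 < e.2 ∧ e.1 < 7 ∧ e.2 < 9 := by decide

theorem nb_comap (G : SimpleGraph (Fin 9)) (φ : Fin 9 ≃ Fin 9) (v : Fin 9) : nb (G.comap φ) v = nb G (φ v) := by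
  classical
  unfold nb
  refine Fintype.sum_equiv φ _ _ ?_
  intro w
  simp

theorem hs_comap (G : SimpleGraph (Fin 9)) (φ : Fin 9 ≃ Fin 9) (h7 : φ 7 = 7) (h8 : φ 8 = 8) :
    hs (G.comap φ) = hs G := by
  classical
  unfold hs
  refine Fintype.sum_equiv φ _ _ ?_
  intro v
  refine Fintype.sum_equiv φ _ _ ?_
  intro w
  have e7 : ∀ x, φ x = 7 ↔ x = 7 := fun x => by
    conv_lhs => rw [← h7]
    exact φ.injective.eq_iff
  have e8 : ∀ x, φ x = 8 ↔ x = 8 := fun x => by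
    conv_lhs => rw [← h8]
    exact φ.injective.eq_iff
  simp [e7, e8]

theorem cons_comap {p : Par} {G : SimpleGraph (Fin 9)} (hC : Cons p G) (φ : Fin 9 ≃ Fin 9) (h7 : φ 7 = 7)
    (h8 : φ 8 = 8) : Cons p (G.comap φ) := by
  have e7 : ∀ x, φ x = 7 ↔ x = 7 := fun x => by
    conv_lhs => rw [← h7]
    exact φ.injective.eq_iff
  have e8 : ∀ x, φ x = 8 ↔ x = 8 := fun x => by
    conv_lhs => rw [← h8]
    exact φ.injective.eq_iff
  constructor
  · intro v hv
    rw [nb_comap]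
    exact hC.hD _ (by rwa [Ne, e7])
  · rw [nb_comap, h7]; exact hC.hDa
  · rw [nb_comap, h7]; exact hC.ha
  · rw [nb_comap, h8]; exact hC.hb
  · rw [hs_comap G φ h7 h8]; exact hC.hH
  · intro hf v hv7 hv8 hv
    rw [nb_comap] at hv
    have := hC.hf hf (φ v) (by rwa [Ne, e7]) (by rwa [Ne, e8]) hv
    simpa [h7, h8] using this

open Classical in
theorem run_sound (p : Par) (Pl Al : List (ℕ × ℕ)) (hrun : run p Pl Al = true) (G : SimpleGraph (Fin 9))
    (hC : Cons p G) (heH : p.eH ≤ 11) (bP : ∀ e ∈ Pl, e.1 < 9 ∧ e.2 < 9) (bA : ∀ e ∈ Al, e.1 < 9 ∧ e.2 < 9)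
    (hP : ∀ φ : Fin 9 ≃ Fin 9, φ 7 = 7 → φ 8 = 8 → ∀ i j : Fin 9, ((i : ℕ), (j : ℕ)) ∈ Pl → G.Adj (φ i) (φ j))
    (hA : ∀ φ : Fin 9 ≃ Fin 9, φ 7 = 7 → φ 8 = 8 → ∀ i j : Fin 9, ((i : ℕ), (j : ℕ)) ∈ Al → ¬ G.Adj (φ i) (φ j)) :
    G.TwoApex := by
  by_cases hpat : HasPat (G.induce ({7, 8} : Set (Fin 9))ᶜ)
  · obtain ⟨g, hg, q, hq, hgq⟩ := hpat
    have hg' : Function.Injective fun i => (g i).1 := Subtype.val_injective.comp hg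
    have hgm : ∀ i, (g i).1 ≠ 7 ∧ (g i).1 ≠ 8 := by
      intro i
      have := (g i).2
      simpa only [Set.mem_compl_iff, Set.mem_insert_iff, Set.mem_singleton_iff, not_or] using this
    let f : Fin 9 → Fin 9 := fun i => if h : i.1 < 7 then (g ⟨i.1, h⟩).1 else i
    have f7 : f 7 = 7 := rfl
    have f8 : f 8 = 8 := rfl
    have fl : ∀ (i : Fin 9) (h : i.1 < 7), f i = (g ⟨i.1, h⟩).1 := fun i h => dif_pos h
    have fr : ∀ (i : Fin 9), ¬ i.1 < 7 → f i = i ∧ (i = 7 ∨ i = 8) := fun i h => ⟨dif_neg h, by omega⟩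
    have hf : Function.Injective f := by
      intro i j hij
      by_cases hi : i.1 < 7 <;> by_cases hj : j.1 < 7
      · rw [fl i hi, fl j hj] at hij
        have := hg' hij
        simp only [Fin.mk.injEq] at this
        exact Fin.ext this
      · rw [fl i hi, (fr j hj).1] at hij
        have := hgm ⟨i.1, hi⟩
        rw [hij] at this
        have := (fr j hj).2
        tauto
      · rw [fl j hj, (fr i hi).1] at hij
        have := hgm ⟨j.1, hj⟩
        rw [← hij] at this
        have := (fr i hi).2
        tauto
      · rwa [(fr i hi).1, (fr j hj).1] at hij
    let φ : Fin 9 ≃ Fin 9 := Equiv.ofBijective f (Finite.injective_iff_bijective.1 hf)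
    have h7 : φ 7 = 7 := f7
    have h8 : φ 8 = 8 := f8
    refine twoApex_of_equiv (G' := G.comap φ) φ.symm (fun x y hxy => by simpa using hxy) ?_
    simp only [run, lall_iff, force_eq] at hrun
    refine search_sound p (G.comap φ) (cons_comap hC φ h7 h8) edges edges_ok _ _ ?_ ?_ (hrun q hq)
    · have hq7 : ∀ q ∈ pats, ∀ e ∈ q, e.1 < 7 ∧ e.2 < 7 := by decide
      apply Lo_mk
      · intro e he
        rcases List.mem_append.1 he with he | he
        · exact bP e he
        · have := hq7 q hq e he
          omega
      · intro i j hij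
        rcases List.mem_append.1 hij with he | he
        · exact hP φ h7 h8 i j he
        · have h := hq7 q hq _ he
          have := hgq ⟨i.1, h.1⟩ ⟨j.1, h.2⟩ he
          have : G.Adj (g ⟨i.1, h.1⟩).1 (g ⟨j.1, h.2⟩).1 := this
          rw [← fl i h.1, ← fl j h.2] at this
          exact this
    · have hdb : ∀ e ∈ diag, e.1 < 9 ∧ e.2 < 9 ∧ e.1 = e.2 := by decide
      apply No_mk
      · intro e he
        rcases List.mem_append.1 he with he | he
        · have := hdb e he
          omega
        · exact bA e he
      · intro i j hij
        rcases List.mem_append.1 hij with he | he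
        · have := (hdb _ he).2.2
          have : i = j := Fin.ext this
          subst this
          simp
        · exact hA φ h7 h8 i j he
  · refine ⟨{7, 8}, (Set.ncard_pair (by decide)).le, planar_of (card7 7 8 (by decide)) ?_ hpat⟩
    have h1 := hC.hH
    refine le_trans ?_ (show hs G ≤ 22 by omega)
    unfold hs
    refine le_trans (Finset.sum_le_sum fun v _ => ?_) (sum_sub_le _ _)
    refine le_trans (Finset.sum_le_sum fun w _ => ?_) (sum_sub_le _ _)
    obtain ⟨v, hv⟩ := v
    obtain ⟨w, hw⟩ := w
    simp only [Set.mem_compl_iff, Set.mem_insert_iff, Set.mem_singleton_iff, not_or] at hv hw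
    simp [hv, hw]

open Classical in
/-- indicator of adjacency -/
noncomputable def ind (G : SimpleGraph (Fin 9)) (v w : Fin 9) : ℕ := if G.Adj v w then 1 else 0

theorem ind_comm (G : SimpleGraph (Fin 9)) (v w : Fin 9) : ind G v w = ind G w v := by
  classical
  unfold ind
  by_cases h : G.Adj v w
  · rw [if_pos h, if_pos h.symm]
  · rw [if_neg h, if_neg fun h2 => h h2.symm]
theorem ind_self (G : SimpleGraph (Fin 9)) (v : Fin 9) : ind G v v = 0 := by simp [ind]
theorem nb_eq (G : SimpleGraph (Fin 9)) (v : Fin 9) : nb G v = ∑ w, ind G v w := rfl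

theorem nb_le (G : SimpleGraph (Fin 9)) (v : Fin 9) : nb G v ≤ 8 := by
  rw [nb_eq]
  have : ∀ w, ind G v w + (if w = v then 1 else 0) ≤ 1 := by
    intro w
    by_cases h : w = v
    · subst h; simp [ind_self]
    · simp only [h, if_false, ind]; split_ifs <;> simp
  have h2 := Finset.sum_le_sum fun w (_ : w ∈ Finset.univ) => this w
  rw [Finset.sum_add_distrib] at h2
  simp at h2
  omega

theorem sum_split (F : Fin 9 → ℕ) : (∑ i, if i ≠ 7 ∧ i ≠ 8 then F i else 0) + F 7 + F 8 = ∑ i, F i := by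
  simp +decide [Fin.sum_univ_succ]
  ring

theorem sum_split7 (F : Fin 9 → ℕ) : (∑ i, if i ≠ 7 then F i else 0) + F 7 = ∑ i, F i := by
  simp +decide [Fin.sum_univ_succ]
  ring

theorem hs_eq (G : SimpleGraph (Fin 9)) :
    hs G + 2 * nb G 7 + 2 * nb G 8 = ∑ v, nb G v + 2 * ind G 7 8 := by
  classical
  have e1 : hs G = ∑ i, if i ≠ 7 ∧ i ≠ 8 then (∑ j, if j ≠ 7 ∧ j ≠ 8 then ind G i j else 0) else 0 := by
    unfold hs
    refine Finset.sum_congr rfl fun i _ => ?_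
    by_cases hi : i ≠ 7 ∧ i ≠ 8
    · rw [if_pos hi]
      refine Finset.sum_congr rfl fun j _ => ?_
      by_cases hj : j ≠ 7 ∧ j ≠ 8
      · simp [hi, hj, ind]
      · rw [if_neg hj, if_neg (by tauto)]
    · rw [if_neg hi]
      refine Finset.sum_eq_zero fun j _ => ?_
      rw [if_neg (by tauto)]
  have e2 := sum_split fun i => ∑ j, if j ≠ 7 ∧ j ≠ 8 then ind G i j else 0
  have e3 : ∀ i, (∑ j, if j ≠ 7 ∧ j ≠ 8 then ind G i j else 0) + ind G i 7 + ind G i 8 = nb G i :=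
    fun i => sum_split _
  have e4 : (∑ i, ∑ j, if j ≠ 7 ∧ j ≠ 8 then ind G i j else 0) + ∑ i, ind G i 7 + ∑ i, ind G i 8 = ∑ i, nb G i := by
    rw [← Finset.sum_add_distrib, ← Finset.sum_add_distrib]
    exact Finset.sum_congr rfl fun i _ => e3 i
  have e5 : ∀ k, ∑ i, ind G i k = nb G k := by
    intro k
    rw [nb_eq]
    exact Finset.sum_congr rfl fun i _ => ind_comm _ _ _
  rw [e5, e5] at e4
  have e6 := e3 7
  have e7 := e3 8
  rw [ind_comm G 8 7] at e7
  rw [ind_self] at e6 e7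
  rw [← e1] at e2
  omega

/-- twice the number of edges avoiding the vertex 7 -/
noncomputable def hs7 (G : SimpleGraph (Fin 9)) : ℕ :=
  ∑ i, if i ≠ 7 then (∑ j, if j ≠ 7 then ind G i j else 0) else 0

theorem hs7_eq (G : SimpleGraph (Fin 9)) : hs7 G + 2 * nb G 7 = ∑ v, nb G v := by
  have e2 := sum_split7 fun i => ∑ j, if j ≠ 7 then ind G i j else 0
  have e3 : ∀ i, (∑ j, if j ≠ 7 then ind G i j else 0) + ind G i 7 = nb G i :=
    fun i => sum_split7 _
  have e4 : (∑ i, ∑ j, if j ≠ 7 then ind G i j else 0) + ∑ i, ind G i 7 = ∑ i, nb G i := by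
    rw [← Finset.sum_add_distrib]
    exact Finset.sum_congr rfl fun i _ => e3 i
  have e5 : ∀ k, ∑ i, ind G i k = nb G k := by
    intro k
    rw [nb_eq]
    exact Finset.sum_congr rfl fun i _ => ind_comm _ _ _
  rw [e5] at e4
  have e6 := e3 7
  rw [ind_self] at e6
  have e1 : hs7 G = ∑ i, if i ≠ 7 then (∑ j, if j ≠ 7 then ind G i j else 0) else 0 := rfl
  rw [← e1] at e2
  omega

theorem handshake (G : SimpleGraph (Fin 9)) : ∑ v, nb G v = 2 * G.edgeSet.ncard := by
  classical
  have h := G.sum_degrees_eq_twice_card_edges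
  have h2 : G.edgeSet.ncard = G.edgeFinset.card := by
    rw [Set.ncard_eq_toFinset_card']; rfl
  rw [h2, ← h]
  refine Finset.sum_congr rfl fun v _ => ?_
  rw [← SimpleGraph.card_neighborFinset_eq_degree, SimpleGraph.neighborFinset_eq_filter, Finset.card_filter]
  rfl

theorem pad (G : SimpleGraph (Fin 9)) (n : ℕ) (h : G.edgeSet.ncard ≤ n) (hn : n ≤ 36) :
    ∃ G' : SimpleGraph (Fin 9), G ≤ G' ∧ G'.edgeSet.ncard = n := by
  classical
  have h2 : G.edgeSet.ncard = G.edgeFinset.card := by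
    rw [Set.ncard_eq_toFinset_card']; rfl
  have h3 : (⊤ : SimpleGraph (Fin 9)).edgeFinset.card = 36 := by
    rw [SimpleGraph.card_edgeFinset_top_eq_card_choose_two]; rfl
  obtain ⟨u, hu1, hu2, hu3⟩ := Finset.exists_subsuperset_card_eq
    (SimpleGraph.edgeFinset_mono (le_top : G ≤ ⊤)) (h2 ▸ h) (by rw [h3]; exact hn)
  have hd : ∀ e ∈ u, ¬ e.IsDiag := by
    intro e he
    have := hu2 he
    rw [SimpleGraph.mem_edgeFinset] at this
    exact SimpleGraph.not_isDiag_of_mem_edgeSet _ this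
  refine ⟨SimpleGraph.fromEdgeSet u, ?_, ?_⟩
  · intro v w hvw
    rw [SimpleGraph.fromEdgeSet_adj]
    refine ⟨?_, hvw.ne⟩
    exact hu1 (by rw [SimpleGraph.mem_edgeFinset]; exact hvw)
  · rw [SimpleGraph.edgeSet_fromEdgeSet]
    have : (u : Set (Sym2 (Fin 9))) \ {e | e.IsDiag} = u := by
      ext e
      simp only [Set.mem_sdiff, Set.mem_ofPred_eq, Finset.mem_coe]
      exact ⟨fun h => h.1, fun h => ⟨h, hd e h⟩⟩
    first
      | rw [this, Set.ncard_coe_finset, hu3]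
      | (convert hu3; rw [← Set.ncard_coe_finset]; congr 1)

theorem exists_perm (a b : Fin 9) (hab : a ≠ b) : ∃ φ : Fin 9 ≃ Fin 9, φ 7 = a ∧ φ 8 = b := by
  refine ⟨(Equiv.swap 7 a).trans (Equiv.swap ((Equiv.swap 7 a) 8) b), ?_, ?_⟩
  · rw [Equiv.trans_apply, Equiv.swap_apply_left, Equiv.swap_apply_of_ne_of_ne _ hab]
    intro h
    have h2 : (Equiv.swap 7 a) 7 = (Equiv.swap 7 a) 8 := by rw [Equiv.swap_apply_left]; exact h
    exact absurd ((Equiv.swap 7 a).injective h2) (by decide)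
  · rw [Equiv.trans_apply, Equiv.swap_apply_left]

theorem comap_apex {G : SimpleGraph (Fin 9)} (φ : Fin 9 ≃ Fin 9) (h : (G.comap φ).TwoApex) : G.TwoApex :=
  twoApex_of_equiv (G' := G.comap φ) φ.symm (fun x y hxy => by simpa using hxy) h

theorem sum_nb_comap (G : SimpleGraph (Fin 9)) (φ : Fin 9 ≃ Fin 9) :
    ∑ v, nb (G.comap φ) v = ∑ v, nb G v :=
  Fintype.sum_equiv φ _ _ fun v => nb_comap G φ v

set_option maxRecDepth 100000 in
theorem r1a : run par1a star [] = true := by decide +kernel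
set_option maxRecDepth 100000 in
theorem r1b : run par1b star [] = true := by decide +kernel
set_option maxRecDepth 100000 in
theorem r1c : run ⟨7, 8, 2, 8, false⟩ star [] = true := by decide +kernel
set_option maxRecDepth 100000 in
theorem r1d : run ⟨8, 8, 1, 7, false⟩ star [] = true := by decide +kernel
set_option maxRecDepth 100000 in
theorem r2 : run par2 [] [(7, 8)] = true := by decide +kernel
set_option maxRecDepth 100000 in
theorem r3 : run par3 [(7, 8)] [] = true := by decide +kernel

/-- case of a dominating vertex 7, the vertex 8 having the next largest degree -/
theorem caseA {G : SimpleGraph (Fin 9)} (h7 : ∀ w, w ≠ 7 → G.Adj 7 w) (hs : ∑ v, nb G v = 44)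
    (h8 : ∀ v, v ≠ 7 → nb G v ≤ nb G 8) : G.TwoApex := by
  have n7 : nb G 7 = 8 := by
    classical
    have := sum_split7 (ind G 7)
    rw [ind_self, ← nb_eq] at this
    rw [← this]
    have e : ∀ i, (if i ≠ 7 then ind G 7 i else 0) = if i ≠ (7 : Fin 9) then 1 else 0 := by
      intro i
      by_cases hi : i = 7
      · simp [hi]
      · simp [hi, ind, h7 i hi]
    simp only [e]
    decide
  have e := hs_eq G
  have i78 : ind G 7 8 = 1 := by simp [ind, h7 8 (by decide)]
  rw [n7, hs, i78] at e
  have n8 := nb_le G 8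
  have l8 : 5 ≤ nb G 8 := by
    have h := sum_split7 (nb G)
    have h2 : (∑ i, if i ≠ 7 then nb G i else 0) ≤ ∑ i : Fin 9, if i ≠ 7 then nb G 8 else 0 := by
      refine Finset.sum_le_sum fun i _ => ?_
      by_cases hi : i = 7
      · simp [hi]
      · simp [hi, h8 i hi]
    have h3 := sum_split7 fun _ => nb G 8
    simp only [Finset.sum_const, Finset.card_univ, Fintype.card_fin, smul_eq_mul] at h3
    omega
  have st : ∀ i j : Fin 9, ((i : ℕ), (j : ℕ)) ∈ star → (j = 7 ∧ i ≠ 7) ∨ (i = 7 ∧ j ≠ 7) := by decide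
  have hP : ∀ φ : Fin 9 ≃ Fin 9, φ 7 = 7 → φ 8 = 8 → ∀ i j : Fin 9, ((i : ℕ), (j : ℕ)) ∈ star →
      G.Adj (φ i) (φ j) := by
    intro φ f7 f8 i j hij
    have ne : ∀ i, i ≠ 7 → φ i ≠ 7 := fun i hi h => hi (φ.injective (h.trans f7.symm))
    rcases st i j hij with ⟨rfl, h⟩ | ⟨rfl, h⟩
    · rw [f7]; exact (h7 _ (ne i h)).symm
    · rw [f7]; exact h7 _ (ne j h)
  have go : ∀ p : Par, run p star [] = true → p.eH ≤ 11 → p.fl = false → p.D = nb G 8 → p.Da = 8 →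
      p.ab + nb G 8 = 9 → p.eH + nb G 8 = 15 → G.TwoApex := by
    intro p hr h1 h2 h3 h4 h5 h6
    refine run_sound p star [] hr G ⟨?_, ?_, ?_, ?_, ?_, ?_⟩ h1 (by decide) (by simp) hP (by simp)
    · intro v hv; rw [h3]; exact h8 v hv
    · omega
    · omega
    · omega
    · omega
    · simp [h2]
  rcases (show nb G 8 = 5 ∨ nb G 8 = 6 ∨ nb G 8 = 7 ∨ nb G 8 = 8 by omega) with h | h | h | h
  · exact go par1b r1b (by decide) rfl (by rw [h]; rfl) rfl (by rw [h]; rfl) (by rw [h]; rfl)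
  · exact go par1a r1a (by decide) rfl (by rw [h]; rfl) rfl (by rw [h]; rfl) (by rw [h]; rfl)
  · exact go _ r1c (by decide) rfl (by rw [h]) rfl (by rw [h]) (by rw [h])
  · exact go _ r1d (by decide) rfl (by rw [h]) rfl (by rw [h]) (by rw [h])

theorem caseA1 {G : SimpleGraph (Fin 9)} (hs : ∑ v, nb G v = 40) (h7 : 6 ≤ nb G 7) : G.TwoApex := by
  classical
  let G1 : SimpleGraph (Fin 9) :=
    { Adj := fun v w => G.Adj v w ∨ (v = 7 ∧ w ≠ 7) ∨ (w = 7 ∧ v ≠ 7)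
      symm := ⟨fun v w h => by
        rcases h with h | h | h
        · exact Or.inl h.symm
        · exact Or.inr (Or.inr h)
        · exact Or.inr (Or.inl h)⟩
      loopless := ⟨fun v h => by
        rcases h with h | h | h
        · exact G.loopless.irrefl v h
        · exact h.2 h.1
        · exact h.2 h.1⟩ }
  have e1 : hs7 G1 = hs7 G := by
    unfold hs7
    refine Finset.sum_congr rfl fun i _ => ?_
    by_cases hi : i = 7
    · simp [hi]
    simp only [Ne, hi, not_false_eq_true, if_true]
    refine Finset.sum_congr rfl fun j _ => ?_
    by_cases hj : j = 7
    · simp [hj]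
    simp [hi, hj, ind, G1]
  have e2 := hs7_eq G
  have e3 := hs7_eq G1
  have e4 := nb_le G1 7
  have e5 := handshake G1
  obtain ⟨G2, hle, hc⟩ := pad G1 22 (by omega) (by norm_num)
  have e6 := handshake G2
  rw [hc] at e6
  have u7 : ∀ w, w ≠ 7 → G2.Adj 7 w := fun w hw => hle (Or.inr (Or.inl ⟨rfl, hw⟩))
  refine twoApex_of_equiv (G' := G2) (Equiv.refl _) (fun x y h => hle (Or.inl h)) ?_
  obtain ⟨b, hb, hmax⟩ := Finset.exists_max_image (Finset.univ.filter fun v : Fin 9 => v ≠ 7) (nb G2) ⟨8, by decide⟩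
  simp only [Finset.mem_filter, Finset.mem_univ, true_and] at hb hmax
  obtain ⟨φ, f7, f8⟩ := exists_perm 7 b hb.symm
  have ne : ∀ i, i ≠ 7 → φ i ≠ 7 := fun i hi h => hi (φ.injective (h.trans f7.symm))
  refine comap_apex φ (caseA ?_ ?_ ?_)
  · intro w hw
    rw [SimpleGraph.comap_adj, f7]
    exact u7 _ (ne w hw)
  · rw [sum_nb_comap]; omega
  · intro v hv
    rw [nb_comap, nb_comap, f8]
    exact hmax _ (ne v hv)

theorem caseB {G : SimpleGraph (Fin 9)} (hs : ∑ v, nb G v = 40) (h5 : ∀ v, nb G v ≤ 5) : G.TwoApex := by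
  classical
  by_cases hex : ∃ a b, a ≠ b ∧ nb G a = 5 ∧ nb G b = 5 ∧ ¬ G.Adj a b
  · obtain ⟨a, b, hab, ha, hb, hn⟩ := hex
    obtain ⟨φ, f7, f8⟩ := exists_perm a b hab
    refine comap_apex φ ?_
    have n7 : nb (G.comap φ) 7 = 5 := by rw [nb_comap, f7, ha]
    have n8 : nb (G.comap φ) 8 = 5 := by rw [nb_comap, f8, hb]
    have e := hs_eq (G.comap φ)
    have i78 : ind (G.comap φ) 7 8 = 0 := by simp [ind, f7, f8, hn]
    rw [n7, n8, i78, sum_nb_comap, hs] at e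
    refine run_sound par2 [] [(7, 8)] r2 _ ⟨?_, ?_, ?_, ?_, ?_, ?_⟩ (by decide) (by simp) (by decide) (by simp) ?_
    · intro v _; rw [nb_comap]; exact h5 _
    · rw [n7]; decide
    · rw [n7]; decide
    · rw [n8]; decide
    · have : par2.eH = 10 := rfl
      omega
    · intro h; exact absurd h (by decide)
    · intro ψ g7 g8 i j hij
      simp only [List.mem_cons, Prod.mk.injEq, List.not_mem_nil, or_false] at hij
      have hi : i = 7 := Fin.ext hij.1
      have hj : j = 8 := Fin.ext hij.2
      rw [hi, hj, g7, g8, SimpleGraph.comap_adj, f7, f8]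
      exact hn
  · push Not at hex
    have hab : ∃ a b, a ≠ b ∧ nb G a = 5 ∧ nb G b = 5 := by
      by_contra hcon
      push Not at hcon
      have : ∃ a, ∀ v, v ≠ a → nb G v ≤ 4 := by
        by_cases h : ∃ a, nb G a = 5
        · obtain ⟨a, ha⟩ := h
          refine ⟨a, fun v hv => ?_⟩
          have := hcon a v hv.symm ha
          have := h5 v
          omega
        · push Not at h
          refine ⟨0, fun v _ => ?_⟩
          have := h v
          have := h5 v
          omega
      obtain ⟨a, ha⟩ := this
      have h : ∑ v, nb G v ≤ ∑ v, (4 + if v = a then 1 else 0) := by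
        refine Finset.sum_le_sum fun v _ => ?_
        by_cases hv : v = a
        · simp [hv, h5 a]
        · simp [hv, ha v hv]
      rw [Finset.sum_add_distrib] at h
      simp at h
      omega
    obtain ⟨a, b, hab, ha, hb⟩ := hab
    have hn := hex a b hab ha hb
    obtain ⟨φ, f7, f8⟩ := exists_perm a b hab
    refine comap_apex φ ?_
    have n7 : nb (G.comap φ) 7 = 5 := by rw [nb_comap, f7, ha]
    have n8 : nb (G.comap φ) 8 = 5 := by rw [nb_comap, f8, hb]
    have e := hs_eq (G.comap φ)
    have i78 : ind (G.comap φ) 7 8 = 1 := by simp [ind, f7, f8, hn]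
    rw [n7, n8, i78, sum_nb_comap, hs] at e
    refine run_sound par3 [(7, 8)] [] r3 _ ⟨?_, ?_, ?_, ?_, ?_, ?_⟩ (by decide) (by decide) (by simp) ?_ (by simp)
    · intro v _; rw [nb_comap]; exact h5 _
    · rw [n7]; decide
    · rw [n7]; decide
    · rw [n8]; decide
    · have : par3.eH = 11 := rfl
      omega
    · intro _ v hv7 hv8 hv
      rw [nb_comap] at hv
      have hv5 : nb G (φ v) = 5 := le_antisymm (h5 _) hv
      rw [SimpleGraph.comap_adj, SimpleGraph.comap_adj, f7, f8]
      exact ⟨hex _ _ (fun h => hv7 (φ.injective (h.trans f7.symm))) hv5 ha,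
        hex _ _ (fun h => hv8 (φ.injective (h.trans f8.symm))) hv5 hb⟩
    · intro ψ g7 g8 i j hij
      simp only [List.mem_cons, Prod.mk.injEq, List.not_mem_nil, or_false] at hij
      have hi : i = 7 := Fin.ext hij.1
      have hj : j = 8 := Fin.ext hij.2
      rw [hi, hj, g7, g8, SimpleGraph.comap_adj, f7, f8]
      exact hn

theorem main9 (G0 : SimpleGraph (Fin 9)) (hE : G0.edgeSet.ncard ≤ 20) : G0.TwoApex := by
  obtain ⟨G, hle, hc⟩ := pad G0 20 hE (by norm_num)
  refine twoApex_of_equiv (G' := G) (Equiv.refl _) (fun x y h => hle h) ?_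
  have hs := handshake G
  rw [hc] at hs
  by_cases h : ∃ a, 6 ≤ nb G a
  · obtain ⟨a, ha⟩ := h
    refine comap_apex (Equiv.swap 7 a) (caseA1 ?_ ?_)
    · rw [sum_nb_comap]; exact hs
    · rw [nb_comap, Equiv.swap_apply_left]; exact ha
  · push Not at h
    exact caseB hs fun v => by have := h v; omega
end TA

/-- Every finite simple graph with exactly 9 vertices and at most 20 edges is 2-apex. -/
theorem stmt2 {V : Type*} [Fintype V] (G : SimpleGraph V)
    (hV : Fintype.card V = 9) (hE : G.edgeSet.ncard ≤ 20) : G.TwoApex := by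
  classical
  let e : V ≃ Fin 9 := Fintype.equivFinOfCardEq hV
  let I : G.comap e.symm ≃g G := SimpleGraph.Iso.comap e.symm G
  refine TA.twoApex_of_equiv (G' := G.comap e.symm) e (fun x y hxy => by simpa using hxy) (TA.main9 _ ?_)
  have : Nat.card (G.comap e.symm).edgeSet = Nat.card G.edgeSet := Nat.card_congr I.mapEdgeSet
  exact le_trans (le_of_eq this) hE
end
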